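/- For all constants L > 0, γ > 1, μ > 0, ρ̄ > 0, ℓ₀ > 0, J̲ > 0, J̄ > 0, m₀ ≥ 0, P₀ ≥ 0, E₀ ≥ 0, K₀ ≥ 0, D₀ ≥ 0, T > 0 there exists a constant C > 0 with the following property. Let ρ₀ ∈ C¹([0,L]) with 0 < ρ₀ ≤ ρ̄, and let (J, v, π) be a sufficiently smooth classical solution of (E1)–(E3) on [0,L]×[0,T] with boundary condition v(0,t) = v(L,t) = 0, such that π₀ ≥ 0, ‖π₀‖_∞ ≤ P₀, J̲ ≤ J₀ ≤ J̄, ∫₀ᴸ J₀ dy = ℓ₀, ∫₀ᴸ ρ₀ dy = m₀, ∫₀ᴸ ( ρ₀ v₀²/2 + J₀ π₀/(γ−1) ) dy = E₀, ‖G₀‖₂ ≤ K₀ where G₀ := μ(∂_y v₀)/J₀ − π₀, and ‖∂_y J₀‖₂ + ‖∂_y π₀‖₂ ≤ D₀. Then: sup_{0≤t≤T} ( ‖∂_t J(·,t)‖₂² + ‖∂_y v(·,t)‖₂² ) + ∫₀ᵀ ( ‖√ρ₀ ∂_t v(·,t)‖₂² + ‖∂_y² v(·,t)‖₂² + ‖∂_y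 ∂_t J(·,t)‖₂² + ‖∂_t π(·,t)‖_∞² + ‖∂_y ∂_t π(·,t)‖₂^{4/3} ) dt ≤ C. -/

import Mathlib

open Set MeasureTheory

/-- A classical solution `(J, v, π)` of the Lagrangian 1D non-heat-conductive compressible
Navier–Stokes system (E1)–(E3) on `[0,L] × [0,T]`, together with its partial derivatives
`Jt = ∂ₜJ`, `vy = ∂_y v`, `vt = ∂ₜv`, `w = ∂_y((∂_y v)/J)`, `πy = ∂_y π`, `πt = ∂ₜπ`,
all continuous on `[0,L] × [0,T]`, and `J > 0` everywhere. -/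
structure ClassicalSolution (L T μ γ : ℝ) (ρ₀ : ℝ → ℝ)
    (J v π Jt vy vt w πy πt : ℝ → ℝ → ℝ) : Prop where
  Jpos : ∀ y ∈ Set.Icc (0:ℝ) L, ∀ t ∈ Set.Icc (0:ℝ) T, 0 < J y t
  contJ : ContinuousOn (fun p : ℝ × ℝ => J p.1 p.2) (Set.Icc 0 L ×ˢ Set.Icc 0 T)
  contv : ContinuousOn (fun p : ℝ × ℝ => v p.1 p.2) (Set.Icc 0 L ×ˢ Set.Icc 0 T)
  contPi : ContinuousOn (fun p : ℝ × ℝ => π p.1 p.2) (Set.Icc 0 L ×ˢ Set.Icc 0 T)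
  hJt : ∀ y ∈ Set.Icc (0:ℝ) L, ∀ t ∈ Set.Icc (0:ℝ) T,
    HasDerivWithinAt (fun s => J y s) (Jt y t) (Set.Icc 0 T) t
  hvy : ∀ y ∈ Set.Icc (0:ℝ) L, ∀ t ∈ Set.Icc (0:ℝ) T,
    HasDerivWithinAt (fun x => v x t) (vy y t) (Set.Icc 0 L) y
  hvt : ∀ y ∈ Set.Icc (0:ℝ) L, ∀ t ∈ Set.Icc (0:ℝ) T,
    HasDerivWithinAt (fun s => v y s) (vt y t) (Set.Icc 0 T) t
  hw : ∀ y ∈ Set.Icc (0:ℝ) L, ∀ t ∈ Set.Icc (0:ℝ) T,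
    HasDerivWithinAt (fun x => vy x t / J x t) (w y t) (Set.Icc 0 L) y
  hPiy : ∀ y ∈ Set.Icc (0:ℝ) L, ∀ t ∈ Set.Icc (0:ℝ) T,
    HasDerivWithinAt (fun x => π x t) (πy y t) (Set.Icc 0 L) y
  hPit : ∀ y ∈ Set.Icc (0:ℝ) L, ∀ t ∈ Set.Icc (0:ℝ) T,
    HasDerivWithinAt (fun s => π y s) (πt y t) (Set.Icc 0 T) t
  contJt : ContinuousOn (fun p : ℝ × ℝ => Jt p.1 p.2) (Set.Icc 0 L ×ˢ Set.Icc 0 T)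
  contvy : ContinuousOn (fun p : ℝ × ℝ => vy p.1 p.2) (Set.Icc 0 L ×ˢ Set.Icc 0 T)
  contvt : ContinuousOn (fun p : ℝ × ℝ => vt p.1 p.2) (Set.Icc 0 L ×ˢ Set.Icc 0 T)
  contw : ContinuousOn (fun p : ℝ × ℝ => w p.1 p.2) (Set.Icc 0 L ×ˢ Set.Icc 0 T)
  contPiy : ContinuousOn (fun p : ℝ × ℝ => πy p.1 p.2) (Set.Icc 0 L ×ˢ Set.Icc 0 T)
  contPit : ContinuousOn (fun p : ℝ × ℝ => πt p.1 p.2) (Set.Icc 0 L ×ˢ Set.Icc 0 T)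
  eq1 : ∀ y ∈ Set.Icc (0:ℝ) L, ∀ t ∈ Set.Icc (0:ℝ) T, Jt y t = vy y t
  eq2 : ∀ y ∈ Set.Icc (0:ℝ) L, ∀ t ∈ Set.Icc (0:ℝ) T,
    ρ₀ y * vt y t - μ * w y t + πy y t = 0
  eq3 : ∀ y ∈ Set.Icc (0:ℝ) L, ∀ t ∈ Set.Icc (0:ℝ) T,
    πt y t + γ * (vy y t / J y t) * π y t = μ * (γ - 1) * (vy y t / J y t) ^ 2

/-! In terms of the effective viscous flux `G = μ v_y / J - π` the system reads
`J_t = J (G + π) / μ`, `G_y = ρ₀ v_t`, and `π_t` is a quadratic form in `(π, G)`.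

* Conservation of `∫ J` and of the energy bounds the momentum, so `μ log J - ∫₀ᵗ π` varies little
  in `y`. Comparing `J` with `J₀ exp (μ⁻¹ ∫₀ᵗ π)` and applying Grönwall's inequality to the integral
  of that weight bounds `J` from below.
* The energies `X = ∫ J G²` and `Y = ∫ ρ₀ v_t²` satisfy `X' ≤ - μ Y + C (1 + X)²`. The rate
  `(γ - 1) ∫ v_y G` of the internal energy controls `X` up to absorbable terms, so
  `log (1 + X)` minus a multiple of the internal energy grows at most linearly; this bounds `X` and
  `∫ Y dt`.
* Interpolation gives `sup |G|² ≲ √(1 + Y)`, which is integrable in time and yields upper bounds for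
  `π` and `J`, and then Grönwall bounds `‖J_y‖₂` and `‖π_y‖₂`.
* Every second-order norm at time `t` is now `≲ 1 + Y t`; the exponent `4/3` is the one for which
  `‖π_yt‖₂² ≲ (1 + Y) ^ (3/2)` suffices. -/

section Calculus

variable {a b c d t : ℝ}

lemma sub_le_sub_of_hasDerivWithinAt_le {f f' g g' : ℝ → ℝ}
    (hf : ∀ s ∈ Icc c d, HasDerivWithinAt f (f' s) (Icc c d) s)
    (hg : ∀ s ∈ Icc c d, HasDerivWithinAt g (g' s) (Icc c d) s)
    (hle : ∀ s ∈ Icc c d, f' s ≤ g' s) (ht : t ∈ Icc c d) :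
    f t - f c ≤ g t - g c := by
  have hderiv : ∀ s ∈ Icc c d, HasDerivWithinAt (fun s => f s - g s) (f' s - g' s) (Icc c d) s :=
    fun s hs => (hf s hs).sub (hg s hs)
  have hanti : AntitoneOn (fun s => f s - g s) (Icc c d) :=
    antitoneOn_of_hasDerivWithinAt_nonpos (convex_Icc c d)
      (fun s hs => (hderiv s hs).continuousWithinAt)
      (fun s hs => (hderiv s (interior_subset hs)).mono interior_subset)
      (fun s hs => sub_nonpos.2 (hle s (interior_subset hs)))
  have := hanti (left_mem_Icc.2 (ht.1.trans ht.2)) ht ht.1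
  dsimp only at this
  linarith

lemma eq_of_hasDerivWithinAt_zero {f : ℝ → ℝ}
    (hf : ∀ s ∈ Icc c d, HasDerivWithinAt f 0 (Icc c d) s) (ht : t ∈ Icc c d) : f t = f c := by
  have hzero : ∀ s ∈ Icc c d, HasDerivWithinAt (fun _ => (0 : ℝ)) 0 (Icc c d) s :=
    fun s _ => hasDerivWithinAt_const s _ 0
  have hle := sub_le_sub_of_hasDerivWithinAt_le hf hzero (fun _ _ => le_rfl) ht
  have hge := sub_le_sub_of_hasDerivWithinAt_le hzero hf (fun _ _ => le_rfl) ht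
  linarith

lemma integral_eq_sub_of_hasDerivWithinAt_Icc {f f' : ℝ → ℝ}
    (hf : ∀ y ∈ Icc c d, HasDerivWithinAt f (f' y) (Icc c d) y)
    (hf' : IntervalIntegrable f' volume a b) (ha : a ∈ Icc c d) (hb : b ∈ Icc c d) :
    ∫ y in a..b, f' y = f b - f a := by
  refine intervalIntegral.integral_eq_sub_of_hasDeriv_right
    (fun y hy => ((hf y (uIcc_subset_Icc ha hb hy)).continuousWithinAt).mono
      (uIcc_subset_Icc ha hb)) (fun y hy => ?_) hf'
  have hy' : y ∈ Ioo c d := ⟨(le_min ha.1 hb.1).trans_lt hy.1, hy.2.trans_le (max_le ha.2 hb.2)⟩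
  exact ((hf y (Ioo_subset_Icc_self hy')).hasDerivAt (Icc_mem_nhds hy'.1 hy'.2)).hasDerivWithinAt

lemma abs_slope_le_of_abs_hasDerivWithinAt_le {f f' : ℝ → ℝ} {M s : ℝ}
    (hf : ∀ r ∈ Icc c d, HasDerivWithinAt f (f' r) (Icc c d) r)
    (hM : ∀ r ∈ Icc c d, |f' r| ≤ M) (ht : t ∈ Icc c d) (hs : s ∈ Icc c d) :
    |slope f t s| ≤ M := by
  rcases eq_or_ne s t with rfl | hne
  · simpa using (abs_nonneg _).trans (hM s hs)
  · rw [slope_def_field, abs_div, div_le_iff₀ (abs_pos.2 (sub_ne_zero.2 hne))]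
    exact (convex_Icc c d).norm_image_sub_le_of_norm_hasDerivWithin_le hf hM ht hs

/- Only the increment of `f` is differentiated in `s`, so the weight `k` merely has to be
continuous. -/
lemma hasDerivWithinAt_integral_sub_mul {f f' k : ℝ → ℝ → ℝ}
    (hfc : Continuous (Function.uncurry f)) (hfc' : Continuous (Function.uncurry f'))
    (hk : Continuous (Function.uncurry k))
    (hf : ∀ y ∈ uIcc a b, ∀ s ∈ Icc c d, HasDerivWithinAt (f y) (f' y s) (Icc c d) s)
    (ht : t ∈ Icc c d) :
    HasDerivWithinAt (fun s => ∫ y in a..b, (f y s - f y t) * k y s)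
      (∫ y in a..b, f' y t * k y t) (Icc c d) t := by
  obtain ⟨M, hM⟩ := (isCompact_uIcc.prod isCompact_Icc).exists_bound_of_continuousOn
    (s := uIcc a b ×ˢ Icc c d) hfc'.continuousOn
  obtain ⟨K, hK⟩ := (isCompact_uIcc.prod isCompact_Icc).exists_bound_of_continuousOn
    (s := uIcc a b ×ˢ Icc c d) hk.continuousOn
  have hslope : slope (fun s => ∫ y in a..b, (f y s - f y t) * k y s) t =
      fun s => ∫ y in a..b, slope (f y) t s * k y s := by
    funext s
    simp only [slope, sub_self, zero_mul, intervalIntegral.integral_zero, vsub_eq_sub, sub_zero,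
      smul_eq_mul, mul_assoc, intervalIntegral.integral_const_mul]
  rw [hasDerivWithinAt_iff_tendsto_slope, hslope]
  refine intervalIntegral.tendsto_integral_filter_of_dominated_convergence (fun _ => M * K)
    (.of_forall fun s => Continuous.aestronglyMeasurable ?_) ?_ intervalIntegrable_const
    (.of_forall fun y hy => ?_)
  · simp only [slope_def_field]
    fun_prop
  · filter_upwards [self_mem_nhdsWithin] with s hs
    refine .of_forall fun y hy => ?_
    have hy' := uIoc_subset_uIcc hy
    have hfs := abs_slope_le_of_abs_hasDerivWithinAt_le (hf y hy') (fun r hr => hM (y, r) ⟨hy', hr⟩)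
      ht hs.1
    rw [norm_mul]
    exact mul_le_mul hfs (hK (y, s) ⟨hy', hs.1⟩) (norm_nonneg _) ((abs_nonneg _).trans hfs)
  · have hky : Continuous (k y) := by fun_prop
    exact (hasDerivWithinAt_iff_tendsto_slope.1 (hf y (uIoc_subset_uIcc hy) t ht)).mul
      hky.continuousWithinAt

lemma hasDerivWithinAt_integral_of_continuous {f f' : ℝ → ℝ → ℝ}
    (hfc : Continuous (Function.uncurry f)) (hfc' : Continuous (Function.uncurry f'))
    (hf : ∀ y ∈ uIcc a b, ∀ s ∈ Icc c d, HasDerivWithinAt (f y) (f' y s) (Icc c d) s)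
    (ht : t ∈ Icc c d) :
    HasDerivWithinAt (fun s => ∫ y in a..b, f y s) (∫ y in a..b, f' y t) (Icc c d) t := by
  have h := (hasDerivWithinAt_integral_sub_mul hfc hfc' (k := fun _ _ => 1) (by fun_prop) hf
    ht).add_const (∫ y in a..b, f y t)
  simp only [mul_one] at h
  refine h.congr_of_mem (fun s _ => ?_) ht
  have hint : ∀ s, IntervalIntegrable (fun y => f y s) volume a b := fun s =>
    Continuous.intervalIntegrable (by fun_prop) a b
  rw [intervalIntegral.integral_sub (hint s) (hint t)]
  ring

lemma hasDerivWithinAt_integral_right {f : ℝ → ℝ} (hf : Continuous f) (S : Set ℝ) :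
    HasDerivWithinAt (fun s => ∫ r in c..s, f r) (f t) S t :=
  (hf.integral_hasStrictDerivAt c t).hasDerivAt.hasDerivWithinAt

lemma continuous_integral_of_continuous {f : ℝ → ℝ → ℝ} (hf : Continuous (Function.uncurry f)) :
    Continuous (fun s => ∫ y in a..b, f y s) :=
  intervalIntegral.continuous_parametric_intervalIntegral_of_continuous'
    (f := fun s y => f y s) (by fun_prop) a b

lemma hasDerivWithinAt_swap {f ft fy fyt : ℝ → ℝ → ℝ} {y : ℝ} (hab : a < b)
    (hftc : Continuous (Function.uncurry ft)) (hfytc : Continuous (Function.uncurry fyt))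
    (hft : ∀ x ∈ Icc a b, ∀ s ∈ Icc c d, HasDerivWithinAt (f x) (ft x s) (Icc c d) s)
    (hfy : ∀ s ∈ Icc c d, HasDerivWithinAt (f · s) (fy y s) (Icc a b) y)
    (hfyt : ∀ x ∈ Icc a b, ∀ s ∈ Icc c d, HasDerivWithinAt (ft · s) (fyt x s) (Icc a b) x)
    (hy : y ∈ Icc a b) (ht : t ∈ Icc c d) :
    HasDerivWithinAt (fy y) (fyt y t) (Icc c d) t := by
  have hc : c ∈ Icc c d := left_mem_Icc.2 (ht.1.trans ht.2)
  have hprimitive : ∀ s ∈ Icc c d, fy y s = fy y c + ∫ r in c..s, fyt y r := by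
    intro s hs
    have hint : HasDerivWithinAt (fun x => ∫ r in c..s, ft x r) (∫ r in c..s, fyt y r)
        (Icc a b) y :=
      hasDerivWithinAt_integral_of_continuous (f := fun r x => ft x r) (f' := fun r x => fyt x r)
        (by fun_prop) (by fun_prop)
        (fun r hr x hx => hfyt x hx r (uIcc_subset_Icc hc hs hr)) hy
    refine (uniqueDiffOn_Icc hab y hy).eq_deriv _ (hfy s hs)
      (((hfy c hc).add hint).congr_of_mem (fun x hx => ?_) hy)
    have := integral_eq_sub_of_hasDerivWithinAt_Icc (hft x hx)
      (Continuous.intervalIntegrable (by fun_prop) _ _) hc hs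
    simp only [Pi.add_apply, this]
    ring
  exact ((hasDerivWithinAt_integral_right (by fun_prop) (Icc c d)).const_add (fy y c)).congr_of_mem
    hprimitive ht

lemma integral_mono_of_continuous {f g : ℝ → ℝ} (hab : a ≤ b) (hf : Continuous f)
    (hg : Continuous g) (hle : ∀ y ∈ Icc a b, f y ≤ g y) :
    ∫ y in a..b, f y ≤ ∫ y in a..b, g y :=
  intervalIntegral.integral_mono_on hab (hf.intervalIntegrable _ _) (hg.intervalIntegrable _ _) hle

lemma integral_linear_combination {f g : ℝ → ℝ} (hf : Continuous f) (hg : Continuous g)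
    (p q : ℝ) :
    ∫ y in a..b, (p * f y + q * g y) = p * (∫ y in a..b, f y) + q * ∫ y in a..b, g y := by
  rw [intervalIntegral.integral_add ((hf.const_mul p).intervalIntegrable _ _)
    ((hg.const_mul q).intervalIntegrable _ _), intervalIntegral.integral_const_mul,
    intervalIntegral.integral_const_mul]

lemma abs_integral_le_integral_abs_Icc {f : ℝ → ℝ} (hf : Continuous f) (ha : a ∈ Icc c d)
    (hb : b ∈ Icc c d) : |∫ y in a..b, f y| ≤ ∫ y in c..d, |f y| := by
  have hcd : c ≤ d := ha.1.trans ha.2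
  calc |∫ y in a..b, f y|
      ≤ |(∫ y in a..b, |f y|)| := by
        simpa only [Real.norm_eq_abs] using
          intervalIntegral.norm_integral_le_abs_integral_norm (f := f) (μ := volume)
    _ ≤ |(∫ y in c..d, |f y|)| := intervalIntegral.abs_integral_mono_interval
        (by rw [uIoc_of_le hcd]; exact Ioc_subset_Ioc (le_min ha.1 hb.1) (max_le ha.2 hb.2))
        (.of_forall fun _ => abs_nonneg _) (hf.abs.intervalIntegrable _ _)
    _ = ∫ y in c..d, |f y| :=
        abs_of_nonneg (intervalIntegral.integral_nonneg hcd fun _ _ => abs_nonneg _)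

lemma integral_mul_apply_le {f f' w : ℝ → ℝ} {y : ℝ} (hw : Continuous w) (hfc : Continuous f)
    (hfc' : Continuous f') (hw0 : ∀ z ∈ Icc c d, 0 ≤ w z)
    (hf : ∀ z ∈ Icc c d, HasDerivWithinAt f (f' z) (Icc c d) z) (hy : y ∈ Icc c d) :
    (∫ z in c..d, w z) * f y
      ≤ (∫ z in c..d, w z * f z) + (∫ z in c..d, w z) * ∫ z in c..d, |f' z| := by
  have hosc : ∀ z ∈ Icc c d, f y ≤ f z + ∫ x in c..d, |f' x| := fun z hz => by
    have := integral_eq_sub_of_hasDerivWithinAt_Icc hf (hfc'.intervalIntegrable _ _) hz hy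
    linarith [le_abs_self (∫ x in z..y, f' x), abs_integral_le_integral_abs_Icc hfc' hz hy]
  calc (∫ z in c..d, w z) * f y = ∫ z in c..d, w z * f y :=
        (intervalIntegral.integral_mul_const _ _).symm
    _ ≤ ∫ z in c..d, (1 * (w z * f z) + (∫ x in c..d, |f' x|) * w z) :=
        integral_mono_of_continuous (hy.1.trans hy.2) (by fun_prop) (by fun_prop) fun z hz => by
          nlinarith [mul_le_mul_of_nonneg_left (hosc z hz) (hw0 z hz)]
    _ = _ := by
        rw [integral_linear_combination (by fun_prop) hw]
        ring

lemma le_exp_integral_mul_of_hasDerivWithinAt_le {f f' p q : ℝ → ℝ} (hp : Continuous p)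
    (hq : Continuous q) (hp0 : ∀ s ∈ Icc c d, 0 ≤ p s) (hq0 : ∀ s ∈ Icc c d, 0 ≤ q s)
    (hf : ∀ s ∈ Icc c d, HasDerivWithinAt f (f' s) (Icc c d) s)
    (hle : ∀ s ∈ Icc c d, f' s ≤ p s * f s + q s) (ht : t ∈ Icc c d) :
    f t ≤ Real.exp (∫ s in c..t, p s) * (f c + ∫ s in c..t, q s) := by
  let u : ℝ → ℝ := fun s => Real.exp (-∫ r in c..s, p r)
  have hu : ∀ s ∈ Icc c d, HasDerivWithinAt u (u s * -p s) (Icc c d) s := fun s _ =>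
    (hasDerivWithinAt_integral_right hp _).neg.exp
  have hu_le : ∀ s ∈ Icc c d, u s ≤ 1 := fun s hs =>
    Real.exp_le_one_iff.2 (neg_nonpos.2 (intervalIntegral.integral_nonneg hs.1 fun r hr =>
      hp0 r ⟨hr.1, hr.2.trans hs.2⟩))
  have hcmp := sub_le_sub_of_hasDerivWithinAt_le (fun s hs => (hu s hs).mul (hf s hs))
    (fun s _ => hasDerivWithinAt_integral_right (c := c) hq (Icc c d)) (fun s hs => by
      have hus : 0 < u s := Real.exp_pos _
      nlinarith [mul_le_mul_of_nonneg_left (hle s hs) hus.le,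
        mul_le_mul_of_nonneg_right (hu_le s hs) (hq0 s hs)]) ht
  simp only [u, Pi.mul_apply, intervalIntegral.integral_same, Real.exp_neg, Real.exp_zero, inv_one,
    one_mul, sub_zero] at hcmp
  rw [← inv_mul_le_iff₀ (Real.exp_pos _)]
  linarith

end Calculus

noncomputable section

/-- The rate `∂ₜJ = ∂_y v = J (G + π) / μ`, expressed through the effective viscous flux
`G = μ (∂_y v) / J - π`. -/
def volumeRate (μ J π G : ℝ) : ℝ := J * (G + π) / μ

/-- The rate `∂ₜπ` prescribed by (E3), expressed through the effective viscous flux `G`. -/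
def pressureRate (γ μ π G : ℝ) : ℝ := (-π ^ 2 + (γ - 2) * (π * G) + (γ - 1) * G ^ 2) / μ

/-- The `y`-derivative of `volumeRate`, where `Jy`, `πy` and `r` are the `y`-derivatives of `J`, `π`
and `G`. -/
def volumeGradRate (μ J π G Jy πy r : ℝ) : ℝ := (Jy * (G + π) + J * (r + πy)) / μ

/-- The `y`-derivative of `pressureRate`, where `πy` and `r` are the `y`-derivatives of `π`
and `G`. -/
def pressureGradRate (γ μ π G πy r : ℝ) : ℝ :=
  (-(2 * π * πy) + (γ - 2) * (πy * G + π * r) + (γ - 1) * (2 * G * r)) / μ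

section Rates

variable {γ μ π G πy r : ℝ}

lemma volumeRate_sq_le (μ J π G : ℝ) :
    volumeRate μ J π G ^ 2 ≤ 2 / μ ^ 2 * (J * (J * G ^ 2) + J ^ 2 * π ^ 2) := by
  calc volumeRate μ J π G ^ 2 = J ^ 2 / μ ^ 2 * (G + π) ^ 2 := by
        unfold volumeRate
        ring
    _ ≤ J ^ 2 / μ ^ 2 * (2 * (G ^ 2 + π ^ 2)) := by
        gcongr
        exact add_sq_le
    _ = _ := by ring

lemma volumeGradRate_sq_le (μ J π G Jy πy r : ℝ) :
    volumeGradRate μ J π G Jy πy r ^ 2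
      ≤ 4 / μ ^ 2 * ((π ^ 2 + G ^ 2) * Jy ^ 2 + J ^ 2 * (πy ^ 2 + r ^ 2)) := by
  calc volumeGradRate μ J π G Jy πy r ^ 2
      = (Jy * (G + π) + J * (r + πy)) ^ 2 / μ ^ 2 := by rw [volumeGradRate, div_pow]
    _ ≤ 2 * ((Jy * (G + π)) ^ 2 + (J * (r + πy)) ^ 2) / μ ^ 2 := by
        gcongr
        exact add_sq_le
    _ = 2 / μ ^ 2 * (Jy ^ 2 * (G + π) ^ 2 + J ^ 2 * (r + πy) ^ 2) := by ring
    _ ≤ 2 / μ ^ 2 * (Jy ^ 2 * (2 * (G ^ 2 + π ^ 2)) + J ^ 2 * (2 * (r ^ 2 + πy ^ 2))) := by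
        gcongr <;> exact add_sq_le
    _ = _ := by ring

lemma pressureRate_le (hμ : 0 < μ) : pressureRate γ μ π G ≤ γ ^ 2 / (4 * μ) * G ^ 2 := by
  rw [pressureRate, div_le_iff₀ hμ]
  calc -π ^ 2 + (γ - 2) * (π * G) + (γ - 1) * G ^ 2
      = γ ^ 2 / 4 * G ^ 2 - (π - (γ - 2) / 2 * G) ^ 2 := by ring
    _ ≤ γ ^ 2 / 4 * G ^ 2 := sub_le_self _ (sq_nonneg _)
    _ = γ ^ 2 / (4 * μ) * G ^ 2 * μ := by field_simp

lemma abs_pressureRate_le (hγ : 1 ≤ γ) (hμ : 0 < μ) :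
    |pressureRate γ μ π G| ≤ 2 * γ * (π ^ 2 + G ^ 2) / μ := by
  rw [pressureRate, abs_div, abs_of_pos hμ]
  gcongr
  have hminus := mul_nonneg (sub_nonneg.2 hγ) (sq_nonneg (π - G))
  have hplus := mul_nonneg (sub_nonneg.2 hγ) (sq_nonneg (π + G))
  have := mul_nonneg (sub_nonneg.2 hγ) (sq_nonneg π)
  have := mul_nonneg (sub_nonneg.2 hγ) (sq_nonneg G)
  rw [abs_le]
  constructor <;> linarith [sq_nonneg (π - G), sq_nonneg (π + G), sq_nonneg π, sq_nonneg G]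

lemma pressureGradRate_eq (γ μ π G πy r : ℝ) :
    pressureGradRate γ μ π G πy r
      = (((γ - 2) * G - 2 * π) * πy + ((γ - 2) * π + 2 * (γ - 1) * G) * r) / μ := by
  unfold pressureGradRate
  ring

lemma pressureGradRate_coeff_sq_add_sq_le (hγ : 1 ≤ γ) :
    ((γ - 2) * G - 2 * π) ^ 2 + ((γ - 2) * π + 2 * (γ - 1) * G) ^ 2
      ≤ 10 * γ ^ 2 * (π ^ 2 + G ^ 2) := by
  have hγ₂ : (γ - 2) ^ 2 ≤ γ ^ 2 := by nlinarith
  have hγ₁ : (γ - 1) ^ 2 ≤ γ ^ 2 := by nlinarith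
  have h1 : 1 ≤ γ ^ 2 := one_le_pow₀ hγ
  calc _ ≤ 2 * (((γ - 2) * G) ^ 2 + (-(2 * π)) ^ 2)
        + 2 * (((γ - 2) * π) ^ 2 + (2 * (γ - 1) * G) ^ 2) := add_le_add add_sq_le add_sq_le
    _ = (2 * (γ - 2) ^ 2 + 8 * 1) * π ^ 2 + (2 * (γ - 2) ^ 2 + 8 * (γ - 1) ^ 2) * G ^ 2 := by ring
    _ ≤ (2 * γ ^ 2 + 8 * γ ^ 2) * π ^ 2 + (2 * γ ^ 2 + 8 * γ ^ 2) * G ^ 2 := by gcongr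
    _ = _ := by ring

lemma pressureGradRate_sq_le (hγ : 1 ≤ γ) :
    pressureGradRate γ μ π G πy r ^ 2
      ≤ 10 * γ ^ 2 * (π ^ 2 + G ^ 2) / μ ^ 2 * (πy ^ 2 + r ^ 2) := by
  have hcauchy : ∀ a b : ℝ, (a * πy + b * r) ^ 2 ≤ (a ^ 2 + b ^ 2) * (πy ^ 2 + r ^ 2) :=
    fun a b => by linarith [sq_nonneg (a * r - b * πy)]
  rw [pressureGradRate_eq, div_pow, div_mul_eq_mul_div]
  gcongr
  exact (hcauchy _ _).trans
    (mul_le_mul_of_nonneg_right (pressureGradRate_coeff_sq_add_sq_le hγ) (by positivity))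

lemma two_mul_mul_pressureGradRate_le (hγ : 1 ≤ γ) (hμ : 0 < μ) :
    2 * πy * pressureGradRate γ μ π G πy r
      ≤ ((1 + 10 * γ ^ 2 * (π ^ 2 + G ^ 2)) * πy ^ 2 + r ^ 2) / μ := by
  have hyoung : ∀ a b : ℝ,
      2 * πy * (a * πy + b * r) ≤ (1 + (a ^ 2 + b ^ 2)) * πy ^ 2 + r ^ 2 :=
    fun a b => by linarith [mul_nonneg (sq_nonneg (a - 1)) (sq_nonneg πy), sq_nonneg (b * πy - r)]
  rw [pressureGradRate_eq, ← mul_div_assoc]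
  gcongr
  refine (hyoung _ _).trans ?_
  gcongr
  exact pressureGradRate_coeff_sq_add_sq_le hγ

end Rates

/-- The quantities on which the constants of the a priori estimates may depend. The bounds `K` for
the initial flux and `D` for the initial gradients enter only through their squares. -/
structure FlowData where
  (L T γ μ ρbar ℓ Jlow Jbar P E K D : ℝ)
  L_pos : 0 < L
  T_pos : 0 < T
  one_lt_γ : 1 < γ
  μ_pos : 0 < μ
  ρbar_pos : 0 < ρbar
  ℓ_pos : 0 < ℓ
  Jlow_pos : 0 < Jlow
  Jbar_pos : 0 < Jbar
  P_nonneg : 0 ≤ P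
  E_nonneg : 0 ≤ E

namespace FlowData

/-- The spatial interval `[0, L]`. -/
abbrev space (d : FlowData) : Set ℝ := Icc 0 d.L

/-- The time interval `[0, T]`. -/
abbrev time (d : FlowData) : Set ℝ := Icc 0 d.T

variable (d : FlowData)

/-- The constant in the Harnack type comparison of the specific volume at two points; the exponent
bounds the variation of `μ⁻¹ ∫ ρ v dy` in time. -/
def harnackConst : ℝ := Real.exp ((d.ρbar * d.L + 2 * d.E) / d.μ)

lemma harnackConst_pos : 0 < d.harnackConst := Real.exp_pos _

/-- The exponential growth rate in time of the integral of the Harnack weight. -/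
def harnackRate : ℝ := d.harnackConst * ((d.γ - 1) * d.E) / (d.ℓ * d.μ)

lemma harnackRate_nonneg : 0 ≤ d.harnackRate := by
  have hγ := sub_pos.2 d.one_lt_γ
  have := d.ℓ_pos
  have := d.μ_pos
  have := d.E_nonneg
  have := d.harnackConst_pos
  unfold harnackRate
  positivity

lemma zero_mem_space : 0 ∈ d.space := left_mem_Icc.2 d.L_pos.le

lemma L_mem_space : d.L ∈ d.space := right_mem_Icc.2 d.L_pos.le

lemma zero_mem_time : 0 ∈ d.time := left_mem_Icc.2 d.T_pos.le

lemma T_mem_time : d.T ∈ d.time := right_mem_Icc.2 d.T_pos.le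

lemma hasDerivWithinAt_integral {f f' : ℝ → ℝ → ℝ} (hfc : Continuous (Function.uncurry f))
    (hfc' : Continuous (Function.uncurry f'))
    (hf : ∀ y ∈ d.space, ∀ t ∈ d.time, HasDerivWithinAt (f y) (f' y t) d.time t)
    {t : ℝ} (ht : t ∈ d.time) :
    HasDerivWithinAt (fun t => ∫ y in 0..d.L, f y t) (∫ y in 0..d.L, f' y t) d.time t :=
  hasDerivWithinAt_integral_of_continuous hfc hfc'
    (fun y hy => hf y (uIcc_subset_Icc d.zero_mem_space d.L_mem_space hy)) ht

end FlowData

/-- A solution of (E1)–(E3) on `[0, L] × [0, T]`, written as a first order system for `J`, `v`, `π`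
and the effective viscous flux `G`: the momentum equation reads `∂_y G = ρ ∂ₜv`, and the gradients
`Jy = ∂_y J`, `πy = ∂_y π` satisfy the equations obtained by differentiating those of `J` and `π`.
Outside of `[0, L] × [0, T]` all fields are merely continuous, which keeps continuity side
conditions free of domains. -/
structure FluxEvolution (d : FlowData) where
  ρ : ℝ → ℝ
  (J v π G vt Jy πy : ℝ → ℝ → ℝ)
  ρ_cont : Continuous ρ
  J_cont : Continuous (Function.uncurry J)
  v_cont : Continuous (Function.uncurry v)
  π_cont : Continuous (Function.uncurry π)
  G_cont : Continuous (Function.uncurry G)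
  vt_cont : Continuous (Function.uncurry vt)
  Jy_cont : Continuous (Function.uncurry Jy)
  πy_cont : Continuous (Function.uncurry πy)
  ρ_nonneg : ∀ y, 0 ≤ ρ y
  ρ_le : ∀ y, ρ y ≤ d.ρbar
  J_pos : ∀ y t, 0 < J y t
  J_hasDeriv : ∀ y ∈ d.space, ∀ t ∈ d.time,
    HasDerivWithinAt (J y) (volumeRate d.μ (J y t) (π y t) (G y t)) d.time t
  v_hasDeriv : ∀ y ∈ d.space, ∀ t ∈ d.time, HasDerivWithinAt (v y) (vt y t) d.time t
  π_hasDeriv : ∀ y ∈ d.space, ∀ t ∈ d.time,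
    HasDerivWithinAt (π y) (pressureRate d.γ d.μ (π y t) (G y t)) d.time t
  v_hasDeriv_space : ∀ y ∈ d.space, ∀ t ∈ d.time,
    HasDerivWithinAt (v · t) (volumeRate d.μ (J y t) (π y t) (G y t)) d.space y
  G_hasDeriv_space : ∀ y ∈ d.space, ∀ t ∈ d.time,
    HasDerivWithinAt (G · t) (ρ y * vt y t) d.space y
  Jy_hasDeriv : ∀ y ∈ d.space, ∀ t ∈ d.time,
    HasDerivWithinAt (Jy y)
      (volumeGradRate d.μ (J y t) (π y t) (G y t) (Jy y t) (πy y t) (ρ y * vt y t)) d.time t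
  πy_hasDeriv : ∀ y ∈ d.space, ∀ t ∈ d.time,
    HasDerivWithinAt (πy y)
      (pressureGradRate d.γ d.μ (π y t) (G y t) (πy y t) (ρ y * vt y t)) d.time t

/-- A solution of the first order system with the boundary and initial conditions described
by `d`. -/
structure FluxSolution (d : FlowData) extends FluxEvolution d where
  v_left : ∀ t ∈ d.time, v 0 t = 0
  v_right : ∀ t ∈ d.time, v d.L t = 0
  initial_π_nonneg : ∀ y ∈ d.space, 0 ≤ π y 0
  initial_π_le : ∀ y ∈ d.space, π y 0 ≤ d.P
  Jlow_le_initial_J : ∀ y ∈ d.space, d.Jlow ≤ J y 0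
  initial_J_le : ∀ y ∈ d.space, J y 0 ≤ d.Jbar
  integral_initial_J : ∫ y in 0..d.L, J y 0 = d.ℓ
  initial_energy : ∫ y in 0..d.L, (ρ y * v y 0 ^ 2 / 2 + J y 0 * π y 0 / (d.γ - 1)) = d.E
  integral_initial_G_sq_le : ∫ y in 0..d.L, G y 0 ^ 2 ≤ d.K ^ 2
  integral_initial_Jy_sq_le : ∫ y in 0..d.L, Jy y 0 ^ 2 ≤ d.D ^ 2
  integral_initial_πy_sq_le : ∫ y in 0..d.L, πy y 0 ^ 2 ≤ d.D ^ 2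

namespace FluxEvolution

variable {d : FlowData} (s : FluxEvolution d) {X : Type*} [TopologicalSpace X] {f g : X → ℝ}

@[fun_prop]
lemma continuous_ρ (hf : Continuous f) : Continuous fun x => s.ρ (f x) :=
  s.ρ_cont.comp hf

@[fun_prop]
lemma continuous_J (hf : Continuous f) (hg : Continuous g) : Continuous fun x => s.J (f x) (g x) :=
  s.J_cont.comp (hf.prodMk hg)

@[fun_prop]
lemma continuous_v (hf : Continuous f) (hg : Continuous g) : Continuous fun x => s.v (f x) (g x) :=
  s.v_cont.comp (hf.prodMk hg)

@[fun_prop]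
lemma continuous_π (hf : Continuous f) (hg : Continuous g) : Continuous fun x => s.π (f x) (g x) :=
  s.π_cont.comp (hf.prodMk hg)

@[fun_prop]
lemma continuous_G (hf : Continuous f) (hg : Continuous g) : Continuous fun x => s.G (f x) (g x) :=
  s.G_cont.comp (hf.prodMk hg)

@[fun_prop]
lemma continuous_vt (hf : Continuous f) (hg : Continuous g) :
    Continuous fun x => s.vt (f x) (g x) :=
  s.vt_cont.comp (hf.prodMk hg)

@[fun_prop]
lemma continuous_Jy (hf : Continuous f) (hg : Continuous g) :
    Continuous fun x => s.Jy (f x) (g x) :=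
  s.Jy_cont.comp (hf.prodMk hg)

@[fun_prop]
lemma continuous_πy (hf : Continuous f) (hg : Continuous g) :
    Continuous fun x => s.πy (f x) (g x) :=
  s.πy_cont.comp (hf.prodMk hg)

/-- The velocity gradient `∂_y v`, which is also `∂ₜJ`. -/
def vy (y t : ℝ) : ℝ := volumeRate d.μ (s.J y t) (s.π y t) (s.G y t)

/-- The pressure rate `∂ₜπ`. -/
def πt (y t : ℝ) : ℝ := pressureRate d.γ d.μ (s.π y t) (s.G y t)

/-- The second derivative `∂_y² v`, which is also `∂_y ∂ₜJ`. -/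
def vyy (y t : ℝ) : ℝ :=
  volumeGradRate d.μ (s.J y t) (s.π y t) (s.G y t) (s.Jy y t) (s.πy y t) (s.ρ y * s.vt y t)

/-- The mixed derivative `∂_y ∂ₜπ`. -/
def πyt (y t : ℝ) : ℝ :=
  pressureGradRate d.γ d.μ (s.π y t) (s.G y t) (s.πy y t) (s.ρ y * s.vt y t)

@[fun_prop]
lemma continuous_vy (hf : Continuous f) (hg : Continuous g) :
    Continuous fun x => s.vy (f x) (g x) := by
  unfold vy volumeRate
  fun_prop

@[fun_prop]
lemma continuous_πt (hf : Continuous f) (hg : Continuous g) :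
    Continuous fun x => s.πt (f x) (g x) := by
  unfold πt pressureRate
  fun_prop

@[fun_prop]
lemma continuous_vyy (hf : Continuous f) (hg : Continuous g) :
    Continuous fun x => s.vyy (f x) (g x) := by
  unfold vyy volumeGradRate
  fun_prop

@[fun_prop]
lemma continuous_πyt (hf : Continuous f) (hg : Continuous g) :
    Continuous fun x => s.πyt (f x) (g x) := by
  unfold πyt pressureGradRate
  fun_prop

end FluxEvolution

namespace FluxSolution

section Conservation

variable {d : FlowData} (s : FluxSolution d) {y t : ℝ}

lemma integral_vy_mul_G_add_v_mul_vt (ht : t ∈ d.time) :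
    ∫ y in 0..d.L, (s.vy y t * s.G y t + s.v y t * (s.ρ y * s.vt y t)) = 0 := by
  refine (integral_eq_sub_of_hasDerivWithinAt_Icc (f := fun y => s.v y t * s.G y t)
    (f' := fun y => s.vy y t * s.G y t + s.v y t * (s.ρ y * s.vt y t))
    (fun y hy => (s.v_hasDeriv_space y hy t ht).mul (s.G_hasDeriv_space y hy t ht))
    (Continuous.intervalIntegrable (by fun_prop) _ _) d.zero_mem_space d.L_mem_space).trans ?_
  simp [s.v_left t ht, s.v_right t ht]

lemma integral_J (ht : t ∈ d.time) : ∫ y in 0..d.L, s.J y t = d.ℓ := by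
  have hvy : ∀ t ∈ d.time, ∫ y in 0..d.L, s.vy y t = 0 := fun t ht =>
    (integral_eq_sub_of_hasDerivWithinAt_Icc (f' := fun y => s.vy y t)
      (fun y hy => s.v_hasDeriv_space y hy t ht)
      (Continuous.intervalIntegrable (by fun_prop) _ _) d.zero_mem_space d.L_mem_space).trans
      (by rw [s.v_left t ht, s.v_right t ht, sub_zero])
  rw [← s.integral_initial_J]
  exact eq_of_hasDerivWithinAt_zero (f := fun t => ∫ y in 0..d.L, s.J y t) (fun t ht =>
    (d.hasDerivWithinAt_integral (f' := s.vy) s.J_cont (by fun_prop) s.J_hasDeriv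
      ht).congr_deriv (hvy t ht)) ht

lemma J_mul_π_hasDeriv (hy : y ∈ d.space) (ht : t ∈ d.time) :
    HasDerivWithinAt (fun t => s.J y t * s.π y t) ((d.γ - 1) * (s.vy y t * s.G y t)) d.time t := by
  refine ((s.J_hasDeriv y hy t ht).mul (s.π_hasDeriv y hy t ht)).congr_deriv ?_
  unfold FluxEvolution.vy volumeRate pressureRate
  ring

lemma energy_eq (ht : t ∈ d.time) :
    ∫ y in 0..d.L, (s.ρ y * s.v y t ^ 2 / 2 + s.J y t * s.π y t / (d.γ - 1)) = d.E := by
  have hγ : d.γ - 1 ≠ 0 := (sub_pos.2 d.one_lt_γ).ne'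
  rw [← s.initial_energy]
  refine eq_of_hasDerivWithinAt_zero
    (f := fun t => ∫ y in 0..d.L, (s.ρ y * s.v y t ^ 2 / 2 + s.J y t * s.π y t / (d.γ - 1)))
    (fun t ht => (d.hasDerivWithinAt_integral
      (f' := fun y t => s.vy y t * s.G y t + s.v y t * (s.ρ y * s.vt y t))
      (by fun_prop) (by fun_prop) (fun y hy t ht => ?_) ht).congr_deriv
        (s.integral_vy_mul_G_add_v_mul_vt ht)) ht
  refine ((((s.v_hasDeriv y hy t ht).pow 2).const_mul (s.ρ y)).div_const 2 |>.add
    ((s.J_mul_π_hasDeriv hy ht).div_const (d.γ - 1))).congr_deriv ?_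
  field_simp
  ring

lemma π_nonneg (hy : y ∈ d.space) (ht : t ∈ d.time) : 0 ≤ s.π y t := by
  have hμ := d.μ_pos.ne'
  have hγ := sub_pos.2 d.one_lt_γ
  have hpow : ∀ t, 0 < s.J y t ^ d.γ := fun t => Real.rpow_pos_of_pos (s.J_pos y t) d.γ
  have hderiv : ∀ t ∈ d.time, HasDerivWithinAt (fun t => s.J y t ^ d.γ * s.π y t)
      (s.J y t ^ d.γ * ((d.γ - 1) * (s.G y t + s.π y t) ^ 2 / d.μ)) d.time t := fun t ht => by
    have hJ := (s.J_pos y t).ne'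
    refine (((s.J_hasDeriv y hy t ht).rpow_const (p := d.γ) (.inl hJ)).mul
      (s.π_hasDeriv y hy t ht)).congr_deriv ?_
    rw [volumeRate, pressureRate, Real.rpow_sub_one hJ]
    field_simp
    ring
  have hmono := sub_le_sub_of_hasDerivWithinAt_le (fun t _ => hasDerivWithinAt_const t _ (0 : ℝ))
    hderiv (fun t _ => mul_nonneg (hpow t).le (by have := d.μ_pos; positivity)) ht
  have hinitial := mul_nonneg (hpow 0).le (s.initial_π_nonneg y hy)
  exact nonneg_of_mul_nonneg_right (by linarith) (hpow t)

end Conservation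

section LowerBound

variable {d : FlowData} (s : FluxSolution d) {y z t : ℝ}

/-- The quantity `∫ J π dy`, which is `γ - 1` times the internal energy. -/
def internalEnergy (t : ℝ) : ℝ := ∫ y in 0..d.L, s.J y t * s.π y t

lemma internalEnergy_le (ht : t ∈ d.time) : s.internalEnergy t ≤ (d.γ - 1) * d.E := by
  have hγ := sub_pos.2 d.one_lt_γ
  rw [internalEnergy, ← s.energy_eq ht, ← intervalIntegral.integral_const_mul]
  refine integral_mono_of_continuous d.L_pos.le (by fun_prop) (by fun_prop) fun y _ => ?_
  have hkinetic : 0 ≤ (d.γ - 1) * (s.ρ y * s.v y t ^ 2 / 2) := by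
    have := s.ρ_nonneg y
    positivity
  rw [mul_add, mul_div_cancel₀ _ hγ.ne']
  linarith

lemma integral_abs_momentum_le (ht : t ∈ d.time) :
    ∫ y in 0..d.L, |s.ρ y * s.v y t| ≤ d.ρbar * d.L / 2 + d.E := by
  have hγ := sub_pos.2 d.one_lt_γ
  calc ∫ y in 0..d.L, |s.ρ y * s.v y t|
      ≤ ∫ y in 0..d.L, (d.ρbar / 2 * 1
          + 1 * (s.ρ y * s.v y t ^ 2 / 2 + s.J y t * s.π y t / (d.γ - 1))) :=
        integral_mono_of_continuous d.L_pos.le (by fun_prop) (by fun_prop) fun y hy => by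
          have hρ := s.ρ_nonneg y
          have hinternal : 0 ≤ s.J y t * s.π y t / (d.γ - 1) :=
            div_nonneg (mul_nonneg (s.J_pos y t).le (s.π_nonneg hy ht)) hγ.le
          rw [abs_mul, abs_of_nonneg hρ]
          nlinarith [s.ρ_le y, mul_nonneg hρ (sq_nonneg (|s.v y t| - 1)), sq_abs (s.v y t)]
    _ = d.ρbar * d.L / 2 + d.E := by
        rw [integral_linear_combination (by fun_prop) (by fun_prop), s.energy_eq ht]
        simp only [intervalIntegral.integral_const, smul_eq_mul]
        ring

lemma log_J_hasDeriv (hy : y ∈ d.space) (ht : t ∈ d.time) :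
    HasDerivWithinAt (fun t => Real.log (s.J y t)) ((s.G y t + s.π y t) / d.μ) d.time t := by
  have hJ := (s.J_pos y t).ne'
  refine ((s.J_hasDeriv y hy t ht).log hJ).congr_deriv ?_
  rw [volumeRate]
  field_simp

/-- The time primitive `μ log J - ∫₀ᵗ π` of the effective viscous flux. -/
def fluxPotential (y t : ℝ) : ℝ := d.μ * Real.log (s.J y t) - ∫ r in 0..t, s.π y r

lemma fluxPotential_hasDeriv (hy : y ∈ d.space) (ht : t ∈ d.time) :
    HasDerivWithinAt (s.fluxPotential y) (s.G y t) d.time t := by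
  have hμ := d.μ_pos.ne'
  refine (((s.log_J_hasDeriv hy ht).const_mul d.μ).sub
    (hasDerivWithinAt_integral_right (by fun_prop) d.time)).congr_deriv ?_
  field_simp
  ring

lemma fluxPotential_sub_fluxPotential (hy : y ∈ d.space) (hz : z ∈ d.space) (ht : t ∈ d.time) :
    s.fluxPotential y t - s.fluxPotential z t - ∫ x in z..y, s.ρ x * s.v x t
      = s.fluxPotential y 0 - s.fluxPotential z 0 - ∫ x in z..y, s.ρ x * s.v x 0 := by
  refine eq_of_hasDerivWithinAt_zero
    (f := fun t => s.fluxPotential y t - s.fluxPotential z t - ∫ x in z..y, s.ρ x * s.v x t)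
    (fun t ht => (((s.fluxPotential_hasDeriv hy ht).sub (s.fluxPotential_hasDeriv hz ht)).sub
      (hasDerivWithinAt_integral_of_continuous (f' := fun x t => s.ρ x * s.vt x t)
        (by fun_prop) (by fun_prop) (fun x hx t ht => (s.v_hasDeriv x
          (uIcc_subset_Icc hz hy hx) t ht).const_mul (s.ρ x)) ht)).congr_deriv ?_) ht
  rw [integral_eq_sub_of_hasDerivWithinAt_Icc (fun y hy => s.G_hasDeriv_space y hy t ht)
    (Continuous.intervalIntegrable (by fun_prop) _ _) hz hy]
  ring

lemma fluxPotential_increment_le (hy : y ∈ d.space) (hz : z ∈ d.space) (ht : t ∈ d.time) :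
    s.fluxPotential y t - s.fluxPotential y 0
      ≤ s.fluxPotential z t - s.fluxPotential z 0 + (d.ρbar * d.L + 2 * d.E) := by
  have hmomentum : ∀ t ∈ d.time, |∫ x in z..y, s.ρ x * s.v x t| ≤ d.ρbar * d.L / 2 + d.E :=
    fun t ht => (abs_integral_le_integral_abs_Icc (by fun_prop) hz hy).trans
      (s.integral_abs_momentum_le ht)
  linarith [s.fluxPotential_sub_fluxPotential hy hz ht, (abs_le.1 (hmomentum t ht)).2,
    (abs_le.1 (hmomentum 0 d.zero_mem_time)).1]

/-- The weight `J₀ exp (μ⁻¹ ∫₀ᵗ π)`, whose ratio to `J` varies little in `y`. -/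
def pressureWeight (y t : ℝ) : ℝ := s.J y 0 * Real.exp ((∫ r in 0..t, s.π y r) / d.μ)

lemma pressureWeight_pos (y t : ℝ) : 0 < s.pressureWeight y t :=
  mul_pos (s.J_pos y 0) (Real.exp_pos _)

@[fun_prop]
lemma continuous_pressureWeight {X : Type*} [TopologicalSpace X] {f g : X → ℝ}
    (hf : Continuous f) (hg : Continuous g) :
    Continuous fun x => s.pressureWeight (f x) (g x) := by
  have : Continuous fun x => ∫ r in 0..g x, s.π (f x) r :=
    intervalIntegral.continuous_parametric_intervalIntegral_of_continuous (by fun_prop) hg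
  unfold pressureWeight
  fun_prop

lemma pressureWeight_hasDeriv (y t : ℝ) :
    HasDerivWithinAt (s.pressureWeight y) (s.pressureWeight y t * s.π y t / d.μ) d.time t := by
  have hprimitive : HasDerivWithinAt (fun t => (∫ r in 0..t, s.π y r) / d.μ) (s.π y t / d.μ)
      d.time t := (hasDerivWithinAt_integral_right (by fun_prop) d.time).div_const d.μ
  refine (hprimitive.exp.const_mul (s.J y 0)).congr_deriv ?_
  rw [pressureWeight]
  ring

lemma J_eq_pressureWeight_mul_exp (y t : ℝ) :
    s.J y t = s.pressureWeight y t
      * Real.exp ((s.fluxPotential y t - s.fluxPotential y 0) / d.μ) := by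
  have hμ := d.μ_pos.ne'
  have hexponent : (∫ r in 0..t, s.π y r) / d.μ
      + (s.fluxPotential y t - s.fluxPotential y 0) / d.μ
      = Real.log (s.J y t) - Real.log (s.J y 0) := by
    simp only [fluxPotential, intervalIntegral.integral_same]
    field_simp
    ring
  rw [pressureWeight, mul_assoc, ← Real.exp_add, hexponent, Real.exp_sub,
    Real.exp_log (s.J_pos y t), Real.exp_log (s.J_pos y 0), mul_div_cancel₀ _ (s.J_pos y 0).ne']

lemma J_mul_pressureWeight_le (hy : y ∈ d.space) (hz : z ∈ d.space) (ht : t ∈ d.time) :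
    s.J y t * s.pressureWeight z t ≤ d.harnackConst * s.J z t * s.pressureWeight y t := by
  have hexp : Real.exp ((s.fluxPotential y t - s.fluxPotential y 0) / d.μ)
      ≤ d.harnackConst * Real.exp ((s.fluxPotential z t - s.fluxPotential z 0) / d.μ) := by
    rw [FlowData.harnackConst, ← Real.exp_add, ← add_div, Real.exp_le_exp]
    exact div_le_div_of_nonneg_right (by linarith [s.fluxPotential_increment_le hy hz ht])
      d.μ_pos.le
  rw [s.J_eq_pressureWeight_mul_exp y t, s.J_eq_pressureWeight_mul_exp z t]
  calc _ = s.pressureWeight y t * s.pressureWeight z t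
        * Real.exp ((s.fluxPotential y t - s.fluxPotential y 0) / d.μ) := by ring
    _ ≤ s.pressureWeight y t * s.pressureWeight z t * (d.harnackConst
        * Real.exp ((s.fluxPotential z t - s.fluxPotential z 0) / d.μ)) :=
      mul_le_mul_of_nonneg_left hexp
        (mul_pos (s.pressureWeight_pos y t) (s.pressureWeight_pos z t)).le
    _ = _ := by ring

lemma ℓ_mul_pressureWeight_le (hz : z ∈ d.space) (ht : t ∈ d.time) :
    d.ℓ * s.pressureWeight z t
      ≤ d.harnackConst * s.J z t * ∫ y in 0..d.L, s.pressureWeight y t := by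
  rw [← s.integral_J ht, ← intervalIntegral.integral_mul_const,
    ← intervalIntegral.integral_const_mul]
  exact integral_mono_of_continuous d.L_pos.le (by fun_prop) (by fun_prop) fun y hy =>
    s.J_mul_pressureWeight_le hy hz ht

lemma integral_pressureWeight_mul_π_le (ht : t ∈ d.time) :
    ∫ y in 0..d.L, s.pressureWeight y t * s.π y t / d.μ
      ≤ d.harnackRate * ∫ y in 0..d.L, s.pressureWeight y t := by
  have hℓ := d.ℓ_pos
  have hμ := d.μ_pos
  have hH := d.harnackConst_pos
  let N := ∫ y in 0..d.L, s.pressureWeight y t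
  have hN : 0 ≤ N :=
    intervalIntegral.integral_nonneg d.L_pos.le fun y _ => (s.pressureWeight_pos y t).le
  calc ∫ y in 0..d.L, s.pressureWeight y t * s.π y t / d.μ
      ≤ ∫ y in 0..d.L, d.harnackConst * N / (d.ℓ * d.μ) * (s.J y t * s.π y t) :=
        integral_mono_of_continuous d.L_pos.le (by fun_prop) (by fun_prop) fun y hy => by
          have := mul_le_mul_of_nonneg_right (s.ℓ_mul_pressureWeight_le hy ht)
            (s.π_nonneg hy ht)
          rw [div_le_iff₀ hμ]
          field_simp
          linarith
    _ = d.harnackConst * N / (d.ℓ * d.μ) * s.internalEnergy t :=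
        intervalIntegral.integral_const_mul _ _
    _ ≤ d.harnackConst * N / (d.ℓ * d.μ) * ((d.γ - 1) * d.E) :=
        mul_le_mul_of_nonneg_left (s.internalEnergy_le ht) (by positivity)
    _ = d.harnackRate * N := by
        rw [FlowData.harnackRate]
        ring

lemma integral_pressureWeight_le (ht : t ∈ d.time) :
    ∫ y in 0..d.L, s.pressureWeight y t ≤ d.ℓ * Real.exp (d.harnackRate * d.T) := by
  have hgronwall := le_exp_integral_mul_of_hasDerivWithinAt_le (p := fun _ => d.harnackRate)
    (q := fun _ => 0) (by fun_prop) (by fun_prop) (fun _ _ => d.harnackRate_nonneg)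
    (fun _ _ => le_rfl)
    (fun t ht => d.hasDerivWithinAt_integral (by fun_prop) (by fun_prop)
      (fun y _ t _ => s.pressureWeight_hasDeriv y t) ht)
    (fun t ht => (s.integral_pressureWeight_mul_π_le ht).trans_eq (add_zero _).symm) ht
  have hinitial : ∫ y in 0..d.L, s.pressureWeight y 0 = d.ℓ := by
    simpa [pressureWeight] using s.integral_initial_J
  rw [hinitial, intervalIntegral.integral_zero, add_zero, intervalIntegral.integral_const,
    smul_eq_mul, sub_zero, mul_comm, mul_comm t] at hgronwall
  refine hgronwall.trans (mul_le_mul_of_nonneg_left (Real.exp_le_exp.2 ?_) d.ℓ_pos.le)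
  exact mul_le_mul_of_nonneg_left ht.2 d.harnackRate_nonneg

lemma exists_pos_le_J (d : FlowData) :
    ∃ c > 0, ∀ s : FluxSolution d, ∀ y ∈ d.space, ∀ t ∈ d.time, c ≤ s.J y t := by
  let M := d.harnackConst * Real.exp (d.harnackRate * d.T)
  have hM : 0 < M := mul_pos d.harnackConst_pos (Real.exp_pos _)
  refine ⟨d.Jlow / M, div_pos d.Jlow_pos hM, fun s y hy t ht => ?_⟩
  have hweight : d.Jlow ≤ s.pressureWeight y t := by
    have hexp : 1 ≤ Real.exp ((∫ r in 0..t, s.π y r) / d.μ) :=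
      Real.one_le_exp (div_nonneg (intervalIntegral.integral_nonneg ht.1 fun r hr =>
        s.π_nonneg hy ⟨hr.1, hr.2.trans ht.2⟩) d.μ_pos.le)
    exact (s.Jlow_le_initial_J y hy).trans (le_mul_of_one_le_right (s.J_pos y 0).le hexp)
  have hprod : d.ℓ * d.Jlow ≤ d.ℓ * (s.J y t * M) := by
    calc d.ℓ * d.Jlow ≤ d.ℓ * s.pressureWeight y t := by gcongr; exact d.ℓ_pos.le
      _ ≤ d.harnackConst * s.J y t * ∫ z in 0..d.L, s.pressureWeight z t :=
          s.ℓ_mul_pressureWeight_le hy ht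
      _ ≤ d.harnackConst * s.J y t * (d.ℓ * Real.exp (d.harnackRate * d.T)) :=
          mul_le_mul_of_nonneg_left (s.integral_pressureWeight_le ht)
            (mul_pos d.harnackConst_pos (s.J_pos y t)).le
      _ = d.ℓ * (s.J y t * M) := by ring
  rw [div_le_iff₀ hM]
  exact le_of_mul_le_mul_left hprod d.ℓ_pos

end LowerBound

section FluxEnergy

variable {d : FlowData} (s : FluxSolution d) {y t : ℝ}

/-- The weighted flux energy `∫ J G² dy`. -/
def fluxEnergy (t : ℝ) : ℝ := ∫ y in 0..d.L, s.J y t * s.G y t ^ 2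

/-- The dissipation `‖√ρ ∂ₜv‖₂² = ∫ ρ (∂ₜv)² dy`. -/
def dissipation (t : ℝ) : ℝ := ∫ y in 0..d.L, s.ρ y * s.vt y t ^ 2

lemma fluxEnergy_nonneg (t : ℝ) : 0 ≤ s.fluxEnergy t :=
  intervalIntegral.integral_nonneg d.L_pos.le fun y _ =>
    mul_nonneg (s.J_pos y t).le (sq_nonneg _)

lemma dissipation_nonneg (t : ℝ) : 0 ≤ s.dissipation t :=
  intervalIntegral.integral_nonneg d.L_pos.le fun y _ => mul_nonneg (s.ρ_nonneg y) (sq_nonneg _)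

@[fun_prop]
lemma continuous_dissipation : Continuous s.dissipation :=
  continuous_integral_of_continuous (f := fun y t => s.ρ y * s.vt y t ^ 2) (by fun_prop)

lemma μ_mul_vy (y t : ℝ) : d.μ * s.vy y t = s.J y t * s.G y t + s.J y t * s.π y t := by
  rw [FluxEvolution.vy, volumeRate, mul_div_cancel₀ _ d.μ_pos.ne', mul_add]

lemma integral_vy_sub_mul_G_add {σ : ℝ} (hσ : σ ∈ d.time) (ht : t ∈ d.time) :
    ∫ y in 0..d.L, (s.vy y σ - s.vy y t) * (s.G y σ + s.G y t)
      = -∫ y in 0..d.L, (s.v y σ - s.v y t) * (s.ρ y * s.vt y σ + s.ρ y * s.vt y t) := by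
  rw [eq_neg_iff_add_eq_zero, ← intervalIntegral.integral_add
    (Continuous.intervalIntegrable (by fun_prop) _ _)
    (Continuous.intervalIntegrable (by fun_prop) _ _)]
  refine (integral_eq_sub_of_hasDerivWithinAt_Icc
    (f := fun y => (s.v y σ - s.v y t) * (s.G y σ + s.G y t))
    (f' := fun y => (s.vy y σ - s.vy y t) * (s.G y σ + s.G y t)
      + (s.v y σ - s.v y t) * (s.ρ y * s.vt y σ + s.ρ y * s.vt y t))
    (fun y hy => ((s.v_hasDeriv_space y hy σ hσ).sub (s.v_hasDeriv_space y hy t ht)).mul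
      ((s.G_hasDeriv_space y hy σ hσ).add (s.G_hasDeriv_space y hy t ht)))
    (Continuous.intervalIntegrable (by fun_prop) _ _) d.zero_mem_space d.L_mem_space).trans ?_
  simp [s.v_left σ hσ, s.v_right σ hσ, s.v_left t ht, s.v_right t ht]

/- `G` is not assumed to be differentiable in time. This form of the increment of `∫ J G²` only
involves increments of `v`, `J π` and `J`, which are. -/
lemma fluxEnergy_eq_add_increment {σ : ℝ} (hσ : σ ∈ d.time) (ht : t ∈ d.time) :
    s.fluxEnergy σ = s.fluxEnergy t
      - d.μ * (∫ y in 0..d.L, (s.v y σ - s.v y t) * (s.ρ y * s.vt y σ + s.ρ y * s.vt y t))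
      - (∫ y in 0..d.L, (s.J y σ * s.π y σ - s.J y t * s.π y t) * (s.G y σ + s.G y t))
      - ∫ y in 0..d.L, (s.J y σ - s.J y t) * (s.G y σ * s.G y t) := by
  have hint : ∀ {f : ℝ → ℝ}, Continuous f → IntervalIntegrable f volume 0 d.L :=
    fun hf => hf.intervalIntegrable _ _
  have hparts := s.integral_vy_sub_mul_G_add hσ ht
  have hsplit : s.fluxEnergy σ - s.fluxEnergy t = ∫ y in 0..d.L,
      (d.μ * ((s.vy y σ - s.vy y t) * (s.G y σ + s.G y t))
        - (s.J y σ * s.π y σ - s.J y t * s.π y t) * (s.G y σ + s.G y t)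
        - (s.J y σ - s.J y t) * (s.G y σ * s.G y t)) := by
    rw [fluxEnergy, fluxEnergy, ← intervalIntegral.integral_sub (hint (by fun_prop))
      (hint (by fun_prop))]
    congr 1 with y
    linear_combination -(s.G y σ + s.G y t) * (s.μ_mul_vy y σ - s.μ_mul_vy y t)
  rw [intervalIntegral.integral_sub (hint (by fun_prop)) (hint (by fun_prop)),
    intervalIntegral.integral_sub (hint (by fun_prop)) (hint (by fun_prop)),
    intervalIntegral.integral_const_mul, hparts] at hsplit
  linarith

lemma fluxEnergy_hasDeriv (ht : t ∈ d.time) :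
    HasDerivWithinAt s.fluxEnergy (-(2 * d.μ) * s.dissipation t
      - (2 * d.γ - 1) * ∫ y in 0..d.L, s.vy y t * s.G y t ^ 2) d.time t := by
  have hspace : uIcc 0 d.L ⊆ d.space := uIcc_subset_Icc d.zero_mem_space d.L_mem_space
  have hv := hasDerivWithinAt_integral_sub_mul (a := 0) (b := d.L) s.v_cont s.vt_cont
    (k := fun y σ => s.ρ y * s.vt y σ + s.ρ y * s.vt y t) (by fun_prop)
    (fun y hy => s.v_hasDeriv y (hspace hy)) ht
  have hJπ := hasDerivWithinAt_integral_sub_mul (a := 0) (b := d.L)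
    (f := fun y σ => s.J y σ * s.π y σ) (f' := fun y σ => (d.γ - 1) * (s.vy y σ * s.G y σ))
    (k := fun y σ => s.G y σ + s.G y t) (by fun_prop) (by fun_prop) (by fun_prop)
    (fun y hy σ hσ => s.J_mul_π_hasDeriv (hspace hy) hσ) ht
  have hJ := hasDerivWithinAt_integral_sub_mul (a := 0) (b := d.L) (f' := s.vy)
    (k := fun y σ => s.G y σ * s.G y t) s.J_cont (by fun_prop) (by fun_prop)
    (fun y hy => s.J_hasDeriv y (hspace hy)) ht
  refine ((((hv.const_mul d.μ).const_sub (s.fluxEnergy t)).sub hJπ).sub hJ).congr_of_mem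
    (fun σ hσ => s.fluxEnergy_eq_add_increment hσ ht) ht |>.congr_deriv ?_
  have hdissipation : ∫ y in 0..d.L, s.vt y t * (s.ρ y * s.vt y t + s.ρ y * s.vt y t)
      = 2 * s.dissipation t := by
    rw [dissipation, ← intervalIntegral.integral_const_mul]
    congr 1 with y
    ring
  have hwork : ∫ y in 0..d.L, (d.γ - 1) * (s.vy y t * s.G y t) * (s.G y t + s.G y t)
      = 2 * (d.γ - 1) * ∫ y in 0..d.L, s.vy y t * s.G y t ^ 2 := by
    rw [← intervalIntegral.integral_const_mul]
    congr 1 with y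
    ring
  simp only [hdissipation, hwork, ← sq]
  ring

lemma internalEnergy_hasDeriv (ht : t ∈ d.time) :
    HasDerivWithinAt s.internalEnergy ((d.γ - 1) * ∫ y in 0..d.L, s.vy y t * s.G y t)
      d.time t := by
  rw [← intervalIntegral.integral_const_mul]
  exact d.hasDerivWithinAt_integral (by fun_prop) (by fun_prop)
    (fun y hy t ht => s.J_mul_π_hasDeriv hy ht) ht

lemma integral_abs_deriv_G_sq_le {c lam : ℝ} (hc : 0 < c) (hJ : ∀ y ∈ d.space, c ≤ s.J y t)
    (hlam : 0 < lam) :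
    ∫ y in 0..d.L, |2 * s.G y t * (s.ρ y * s.vt y t)|
      ≤ lam * (d.ρbar / c) * s.fluxEnergy t + lam⁻¹ * s.dissipation t := by
  rw [fluxEnergy, dissipation, ← integral_linear_combination (by fun_prop) (by fun_prop)]
  refine integral_mono_of_continuous d.L_pos.le (by fun_prop) (by fun_prop) fun y hy => ?_
  have hρ := s.ρ_nonneg y
  have hρbar := d.ρbar_pos
  have hρJ : s.ρ y ≤ d.ρbar / c * s.J y t := by
    rw [div_mul_eq_mul_div, le_div_iff₀ hc]
    exact mul_le_mul (s.ρ_le y) (hJ y hy) hc.le hρbar.le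
  calc |2 * s.G y t * (s.ρ y * s.vt y t)|
      = s.ρ y * (2 * |s.G y t| * |s.vt y t|) := by
        simp only [abs_mul, abs_of_nonneg hρ, abs_two]
        ring
    _ ≤ s.ρ y * (lam * s.G y t ^ 2 + lam⁻¹ * s.vt y t ^ 2) := by
        rw [← sq_abs (s.G y t), ← sq_abs (s.vt y t)]
        exact mul_le_mul_of_nonneg_left (two_mul_le_add_mul_sq hlam) hρ
    _ = lam * (s.ρ y * s.G y t ^ 2) + lam⁻¹ * (s.ρ y * s.vt y t ^ 2) := by ring
    _ ≤ lam * (d.ρbar / c * s.J y t * s.G y t ^ 2) + lam⁻¹ * (s.ρ y * s.vt y t ^ 2) := by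
        gcongr
    _ = _ := by ring

lemma exists_G_sq_le (d : FlowData) : ∃ a > 0, ∀ (s : FluxSolution d), ∀ y ∈ d.space,
    ∀ t ∈ d.time, ∀ lam > 0,
      s.G y t ^ 2 ≤ a * (1 + lam) * s.fluxEnergy t + s.dissipation t / lam := by
  obtain ⟨c, hc, hJ⟩ := exists_pos_le_J d
  have hℓ := d.ℓ_pos
  have hρbar := d.ρbar_pos
  refine ⟨d.ℓ⁻¹ + d.ρbar / c, by positivity, fun s y hy t ht lam hlam => ?_⟩
  have hX := s.fluxEnergy_nonneg t
  have hvariation := s.integral_abs_deriv_G_sq_le hc (fun y hy => hJ s y hy t ht) hlam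
  have hmean := integral_mul_apply_le (w := fun z => s.J z t) (f := fun z => s.G z t ^ 2)
    (f' := fun z => 2 * s.G z t * (s.ρ z * s.vt z t))
    (by fun_prop) (by fun_prop) (by fun_prop) (fun z _ => (s.J_pos z t).le)
    (fun z hz => ((s.G_hasDeriv_space z hz t ht).pow 2).congr_deriv (by ring)) hy
  rw [s.integral_J ht, ← le_inv_mul_iff₀ hℓ, mul_add, inv_mul_cancel_left₀ hℓ.ne'] at hmean
  have hslack : 0 ≤ lam * (d.ℓ⁻¹ * s.fluxEnergy t) + d.ρbar / c * s.fluxEnergy t := by positivity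
  calc s.G y t ^ 2 ≤ d.ℓ⁻¹ * s.fluxEnergy t
        + (lam * (d.ρbar / c) * s.fluxEnergy t + lam⁻¹ * s.dissipation t) :=
        hmean.trans (add_le_add_right hvariation _)
    _ ≤ (d.ℓ⁻¹ + d.ρbar / c) * (1 + lam) * s.fluxEnergy t + s.dissipation t / lam := by
        rw [div_eq_inv_mul (s.dissipation t)]
        linarith

end FluxEnergy

section FluxBounds

lemma exists_abs_G_le (d : FlowData) {ε η : ℝ} (hε : 0 < ε) (hη : 0 < η) :
    ∃ C > 0, ∀ (s : FluxSolution d), ∀ y ∈ d.space, ∀ t ∈ d.time,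
      |s.G y t| ≤ ε * (1 + s.fluxEnergy t) + C
        + η * (s.dissipation t / (1 + s.fluxEnergy t)) := by
  obtain ⟨a, ha, hG⟩ := exists_G_sq_le d
  let lam := 1 / (4 * ε * η)
  have hlam : 0 < lam := by positivity
  refine ⟨a * (1 + lam) / (4 * ε), by positivity, fun s y hy t ht => ?_⟩
  have hX := s.fluxEnergy_nonneg t
  have hGsq := hG s y hy t ht lam hlam
  let u := 1 + s.fluxEnergy t
  have hu : 0 < u := by positivity
  have hyoung : 4 * ε * u * |s.G y t| ≤ (2 * ε * u) ^ 2 + s.G y t ^ 2 := by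
    nlinarith [sq_nonneg (2 * ε * u - |s.G y t|), sq_abs (s.G y t)]
  have hXu : a * (1 + lam) * s.fluxEnergy t ≤ a * (1 + lam) * u := by
    gcongr
    exact le_add_of_nonneg_left zero_le_one
  have hY : s.dissipation t / lam = 4 * ε * η * s.dissipation t := by
    simp only [lam]
    field_simp
  calc |s.G y t| ≤ ((2 * ε * u) ^ 2 + a * (1 + lam) * u + 4 * ε * η * s.dissipation t)
        / (4 * ε * u) := by
        rw [le_div_iff₀' (by positivity)]
        linarith
    _ = ε * u + a * (1 + lam) / (4 * ε) + η * (s.dissipation t / u) := by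
        field_simp
        ring

lemma exists_fluxEnergy_deriv_le (d : FlowData) :
    ∃ C > 0, ∀ (s : FluxSolution d), ∀ t ∈ d.time,
      -(2 * d.μ) * s.dissipation t - (2 * d.γ - 1) * (∫ y in 0..d.L, s.vy y t * s.G y t ^ 2)
        ≤ -d.μ * s.dissipation t + C * (1 + s.fluxEnergy t) ^ 2 := by
  have hμ := d.μ_pos
  let κ := (2 * d.γ - 1) / d.μ
  have hκ : 0 < κ := div_pos (by linarith [d.one_lt_γ]) hμ
  obtain ⟨C, hC, hG⟩ := exists_abs_G_le d one_pos (div_pos hμ hκ)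
  refine ⟨κ * (1 + C), by positivity, fun s t ht => ?_⟩
  have hX := s.fluxEnergy_nonneg t
  have hY := s.dissipation_nonneg t
  let u := 1 + s.fluxEnergy t
  let g := 1 * u + C + d.μ / κ * (s.dissipation t / u)
  have hu : 1 ≤ u := le_add_of_nonneg_right hX
  have hg : 0 ≤ g := by positivity
  have hpressure : -(2 * d.γ - 1) * (∫ y in 0..d.L, s.vy y t * s.G y t ^ 2)
      ≤ κ * g * s.fluxEnergy t := by
    rw [fluxEnergy, ← intervalIntegral.integral_const_mul, ← intervalIntegral.integral_const_mul]
    refine integral_mono_of_continuous d.L_pos.le (by fun_prop) (by fun_prop) fun y hy => ?_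
    have hJG : 0 ≤ s.J y t * s.G y t ^ 2 := mul_nonneg (s.J_pos y t).le (sq_nonneg _)
    have hneg : -(s.G y t + s.π y t) ≤ g := by
      linarith [neg_abs_le (s.G y t), s.π_nonneg hy ht, hG s y hy t ht]
    calc -(2 * d.γ - 1) * (s.vy y t * s.G y t ^ 2)
        = κ * -(s.G y t + s.π y t) * (s.J y t * s.G y t ^ 2) := by
          simp only [κ, FluxEvolution.vy, volumeRate]
          ring
      _ ≤ κ * g * (s.J y t * s.G y t ^ 2) := by gcongr
  have habsorb : κ * g * u = κ * u ^ 2 + κ * C * u + d.μ * s.dissipation t := by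
    simp only [g]
    field_simp
  have hgX : κ * g * s.fluxEnergy t ≤ κ * g * u :=
    mul_le_mul_of_nonneg_left (le_add_of_nonneg_left zero_le_one) (mul_nonneg hκ.le hg)
  have hCu : κ * C * u ≤ κ * C * u ^ 2 := by
    gcongr
    exact le_self_pow₀ hu two_ne_zero
  linarith

lemma fluxEnergy_sub_le_power {d : FlowData} (s : FluxSolution d) {g t : ℝ} (ht : t ∈ d.time)
    (hg : ∀ y ∈ d.space, -g ≤ s.G y t) :
    s.fluxEnergy t - g * s.internalEnergy t ≤ d.μ * ∫ y in 0..d.L, s.vy y t * s.G y t := by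
  calc s.fluxEnergy t - g * s.internalEnergy t
      = ∫ y in 0..d.L, (1 * (s.J y t * s.G y t ^ 2) + -g * (s.J y t * s.π y t)) := by
        rw [integral_linear_combination (by fun_prop) (by fun_prop), fluxEnergy, internalEnergy]
        ring
    _ ≤ ∫ y in 0..d.L, d.μ * (s.vy y t * s.G y t) := by
        refine integral_mono_of_continuous d.L_pos.le (by fun_prop) (by fun_prop) fun y hy => ?_
        have hJπ : 0 ≤ s.J y t * s.π y t := mul_nonneg (s.J_pos y t).le (s.π_nonneg hy ht)
        rw [← mul_assoc d.μ, s.μ_mul_vy]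
        linarith [mul_le_mul_of_nonneg_right (hg y hy) hJπ]
    _ = d.μ * ∫ y in 0..d.L, s.vy y t * s.G y t := intervalIntegral.integral_const_mul _ _

lemma exists_one_add_fluxEnergy_le (d : FlowData) {η : ℝ} (hη : 0 < η) :
    ∃ B > 0, ∀ (s : FluxSolution d), ∀ t ∈ d.time,
      1 + s.fluxEnergy t ≤ B + 2 * d.μ * (∫ y in 0..d.L, s.vy y t * s.G y t)
        + η * (s.dissipation t / (1 + s.fluxEnergy t)) := by
  have hγ := sub_pos.2 d.one_lt_γ
  have hE := d.E_nonneg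
  let F := (d.γ - 1) * d.E
  have hF : 0 ≤ F := by positivity
  obtain ⟨C, hC, hG⟩ := exists_abs_G_le d (ε := 1 / (2 * (F + 1))) (η := η / (2 * (F + 1)))
    (by positivity) (by positivity)
  refine ⟨2 * (1 + C * F), by positivity, fun s t ht => ?_⟩
  have hX := s.fluxEnergy_nonneg t
  have hY := s.dissipation_nonneg t
  let u := 1 + s.fluxEnergy t
  let Z := s.dissipation t / u
  let g := 1 / (2 * (F + 1)) * u + C + η / (2 * (F + 1)) * Z
  have : 0 < u := by positivity
  have : 0 ≤ Z := by positivity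
  have hpower : s.fluxEnergy t - g * s.internalEnergy t
      ≤ d.μ * ∫ y in 0..d.L, s.vy y t * s.G y t :=
    s.fluxEnergy_sub_le_power ht fun y hy => neg_le_of_abs_le (hG s y hy t ht)
  have hinternal : g * s.internalEnergy t ≤ g * F :=
    mul_le_mul_of_nonneg_left (s.internalEnergy_le ht) (by positivity)
  have hgF : g * F ≤ u / 2 + C * F + η / 2 * Z := by
    have hratio : F / (F + 1) ≤ 1 := (div_le_one (by positivity)).2 (by linarith)
    calc g * F = F / (F + 1) * (u / 2 + η / 2 * Z) + C * F := by
          simp only [g]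
          field_simp
          ring
      _ ≤ 1 * (u / 2 + η / 2 * Z) + C * F := by gcongr
      _ = _ := by ring
  change u ≤ _ + η * Z
  have : u = 1 + s.fluxEnergy t := rfl
  linarith

lemma fluxEnergy_zero_le {d : FlowData} (s : FluxSolution d) :
    s.fluxEnergy 0 ≤ d.Jbar * d.K ^ 2 :=
  calc s.fluxEnergy 0 ≤ ∫ y in 0..d.L, d.Jbar * s.G y 0 ^ 2 :=
        integral_mono_of_continuous d.L_pos.le (by fun_prop) (by fun_prop) fun y hy =>
          mul_le_mul_of_nonneg_right (s.initial_J_le y hy) (sq_nonneg _)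
    _ ≤ d.Jbar * d.K ^ 2 := by
        rw [intervalIntegral.integral_const_mul]
        exact mul_le_mul_of_nonneg_left s.integral_initial_G_sq_le d.Jbar_pos.le

lemma exists_log_deriv_fluxEnergy_le (d : FlowData) :
    ∃ A > 0, ∃ B > 0, ∀ (s : FluxSolution d), ∀ t ∈ d.time,
      (-(2 * d.μ) * s.dissipation t - (2 * d.γ - 1) * (∫ y in 0..d.L, s.vy y t * s.G y t ^ 2))
        / (1 + s.fluxEnergy t) ≤ A * ((d.γ - 1) * ∫ y in 0..d.L, s.vy y t * s.G y t) + B := by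
  have hμ := d.μ_pos
  have hγ := sub_pos.2 d.one_lt_γ
  obtain ⟨C, hC, hderiv⟩ := exists_fluxEnergy_deriv_le d
  obtain ⟨B, hB, hX_le⟩ := exists_one_add_fluxEnergy_le d (div_pos hμ hC)
  refine ⟨2 * C * d.μ / (d.γ - 1), by positivity, C * B, by positivity, fun s t ht => ?_⟩
  have hu : 0 < 1 + s.fluxEnergy t := by linarith [s.fluxEnergy_nonneg t]
  calc _ ≤ (-d.μ * s.dissipation t + C * (1 + s.fluxEnergy t) ^ 2) / (1 + s.fluxEnergy t) :=
        div_le_div_of_nonneg_right (hderiv s t ht) hu.le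
    _ = -d.μ * (s.dissipation t / (1 + s.fluxEnergy t)) + C * (1 + s.fluxEnergy t) := by
        field_simp
    _ ≤ -d.μ * (s.dissipation t / (1 + s.fluxEnergy t))
          + C * (B + 2 * d.μ * (∫ y in 0..d.L, s.vy y t * s.G y t)
            + d.μ / C * (s.dissipation t / (1 + s.fluxEnergy t))) :=
        add_le_add_right (mul_le_mul_of_nonneg_left (hX_le s t ht) hC.le) _
    _ = _ := by
        field_simp
        ring

lemma exists_fluxEnergy_le (d : FlowData) :
    ∃ M > 0, ∀ (s : FluxSolution d), ∀ t ∈ d.time, s.fluxEnergy t ≤ M := by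
  obtain ⟨A, hA, B, hB, hlog⟩ := exists_log_deriv_fluxEnergy_le d
  refine ⟨Real.exp (Real.log (1 + d.Jbar * d.K ^ 2) + A * ((d.γ - 1) * d.E) + B * d.T),
    Real.exp_pos _, fun s t ht => ?_⟩
  have hu : ∀ t, 0 < 1 + s.fluxEnergy t := fun t => by linarith [s.fluxEnergy_nonneg t]
  have hcmp := sub_le_sub_of_hasDerivWithinAt_le (f := fun t => Real.log (1 + s.fluxEnergy t))
    (g := fun t => A * s.internalEnergy t + B * t)
    (fun t ht => ((s.fluxEnergy_hasDeriv ht).const_add 1).log (hu t).ne')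
    (fun t ht => ((s.internalEnergy_hasDeriv ht).const_mul A).add
      ((hasDerivWithinAt_id t _).const_mul B))
    (fun t ht => by simpa only [mul_one] using hlog s t ht) ht
  have hinitial : Real.log (1 + s.fluxEnergy 0) ≤ Real.log (1 + d.Jbar * d.K ^ 2) :=
    Real.log_le_log (hu 0) (by linarith [s.fluxEnergy_zero_le])
  have hinternal_zero : 0 ≤ A * s.internalEnergy 0 :=
    mul_nonneg hA.le (intervalIntegral.integral_nonneg d.L_pos.le fun y hy =>
      mul_nonneg (s.J_pos y 0).le (s.initial_π_nonneg y hy))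
  have hinternal : A * s.internalEnergy t ≤ A * ((d.γ - 1) * d.E) :=
    mul_le_mul_of_nonneg_left (s.internalEnergy_le ht) hA.le
  have htime : B * t ≤ B * d.T := mul_le_mul_of_nonneg_left ht.2 hB.le
  have hexp : 1 + s.fluxEnergy t
      ≤ Real.exp (Real.log (1 + d.Jbar * d.K ^ 2) + A * ((d.γ - 1) * d.E) + B * d.T) := by
    rw [← Real.log_le_iff_le_exp (hu t)]
    linarith
  linarith

lemma exists_integral_dissipation_le (d : FlowData) :
    ∃ M > 0, ∀ (s : FluxSolution d), ∀ t ∈ d.time, ∫ r in 0..t, s.dissipation r ≤ M := by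
  have hμ := d.μ_pos
  have hT := d.T_pos
  obtain ⟨C, hC, hderiv⟩ := exists_fluxEnergy_deriv_le d
  obtain ⟨M, hM, hX_le⟩ := exists_fluxEnergy_le d
  refine ⟨(M + C * (1 + M) ^ 2 * d.T) / d.μ, by positivity, fun s t ht => ?_⟩
  have hcmp := sub_le_sub_of_hasDerivWithinAt_le (f := s.fluxEnergy)
    (g := fun t => -d.μ * (∫ r in 0..t, s.dissipation r) + C * (1 + M) ^ 2 * t)
    (fun t ht => s.fluxEnergy_hasDeriv ht)
    (fun t _ => ((hasDerivWithinAt_integral_right s.continuous_dissipation _).const_mul _).add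
      ((hasDerivWithinAt_id t _).const_mul _))
    (fun t ht => by
      have hX := s.fluxEnergy_nonneg t
      have hsq : C * (1 + s.fluxEnergy t) ^ 2 ≤ C * (1 + M) ^ 2 := by
        gcongr
        exact hX_le s t ht
      linarith [hderiv s t ht]) ht
  rw [intervalIntegral.integral_same] at hcmp
  have htime : C * (1 + M) ^ 2 * t ≤ C * (1 + M) ^ 2 * d.T :=
    mul_le_mul_of_nonneg_left ht.2 (by positivity)
  rw [le_div_iff₀' hμ]
  linarith [hX_le s 0 d.zero_mem_time, s.fluxEnergy_nonneg t, htime]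

lemma one_le_sqrt_one_add_dissipation {d : FlowData} (s : FluxSolution d) (t : ℝ) :
    1 ≤ √(1 + s.dissipation t) :=
  Real.one_le_sqrt.2 (le_add_of_nonneg_right (s.dissipation_nonneg t))

lemma exists_G_sq_le_sqrt (d : FlowData) :
    ∃ k > 0, ∀ (s : FluxSolution d), ∀ y ∈ d.space, ∀ t ∈ d.time,
      s.G y t ^ 2 ≤ k * √(1 + s.dissipation t) := by
  obtain ⟨a, ha, hG⟩ := exists_G_sq_le d
  obtain ⟨M, hM, hX_le⟩ := exists_fluxEnergy_le d
  refine ⟨2 * a * M + 1, by positivity, fun s y hy t ht => ?_⟩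
  have hX := s.fluxEnergy_nonneg t
  have hY := s.dissipation_nonneg t
  have hone := s.one_le_sqrt_one_add_dissipation t
  calc s.G y t ^ 2 ≤ a * (1 + √(1 + s.dissipation t)) * s.fluxEnergy t
        + s.dissipation t / √(1 + s.dissipation t) := hG s y hy t ht _ (by positivity)
    _ ≤ a * (√(1 + s.dissipation t) + √(1 + s.dissipation t)) * M + √(1 + s.dissipation t) := by
        gcongr
        · exact hX_le s t ht
        · rw [div_le_iff₀ (by positivity), Real.mul_self_sqrt (by positivity)]
          linarith
    _ = (2 * a * M + 1) * √(1 + s.dissipation t) := by ring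

end FluxBounds

section UpperBounds

lemma sqrt_one_add_dissipation_le {d : FlowData} (s : FluxSolution d) (t : ℝ) :
    √(1 + s.dissipation t) ≤ 1 + s.dissipation t :=
  Real.sqrt_le_iff.2 ⟨by linarith [s.dissipation_nonneg t],
    le_self_pow₀ (le_add_of_nonneg_right (s.dissipation_nonneg t)) two_ne_zero⟩

@[fun_prop]
lemma continuous_sqrt_one_add_dissipation {d : FlowData} (s : FluxSolution d) :
    Continuous fun t => √(1 + s.dissipation t) :=
  (s.continuous_dissipation.const_add 1).sqrt

lemma exists_integral_sqrt_dissipation_le (d : FlowData) :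
    ∃ Q > 0, ∀ (s : FluxSolution d), ∀ t ∈ d.time, ∫ r in 0..t, √(1 + s.dissipation r) ≤ Q := by
  have hT := d.T_pos
  obtain ⟨M, hM, hY_le⟩ := exists_integral_dissipation_le d
  refine ⟨d.T + M, by positivity, fun s t ht => ?_⟩
  have hY := s.continuous_dissipation
  calc ∫ r in 0..t, √(1 + s.dissipation r) ≤ ∫ r in 0..t, (1 + s.dissipation r) :=
        integral_mono_of_continuous ht.1 (by fun_prop) (by fun_prop) fun r _ =>
          s.sqrt_one_add_dissipation_le r
    _ = t + ∫ r in 0..t, s.dissipation r := by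
        rw [intervalIntegral.integral_add (by simp) (hY.intervalIntegrable _ _)]
        simp
    _ ≤ d.T + M := add_le_add ht.2 (hY_le s t ht)

lemma exists_π_le (d : FlowData) :
    ∃ M > 0, ∀ (s : FluxSolution d), ∀ y ∈ d.space, ∀ t ∈ d.time, s.π y t ≤ M := by
  have hμ := d.μ_pos
  have hP := d.P_nonneg
  have hγ := zero_lt_one.trans d.one_lt_γ
  obtain ⟨k, hk, hG⟩ := exists_G_sq_le_sqrt d
  obtain ⟨Q, hQ, hint⟩ := exists_integral_sqrt_dissipation_le d
  refine ⟨d.P + d.γ ^ 2 / (4 * d.μ) * k * Q, by positivity, fun s y hy t ht => ?_⟩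
  have hcmp := sub_le_sub_of_hasDerivWithinAt_le (f := s.π y)
    (g := fun t => d.γ ^ 2 / (4 * d.μ) * k * ∫ r in 0..t, √(1 + s.dissipation r))
    (fun t ht => s.π_hasDeriv y hy t ht)
    (fun t _ => (hasDerivWithinAt_integral_right (by fun_prop) _).const_mul _)
    (fun t ht => (pressureRate_le hμ).trans (by
      rw [mul_assoc]
      exact mul_le_mul_of_nonneg_left (hG s y hy t ht) (by positivity))) ht
  rw [intervalIntegral.integral_same] at hcmp
  have hQ_le : d.γ ^ 2 / (4 * d.μ) * k * (∫ r in 0..t, √(1 + s.dissipation r))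
      ≤ d.γ ^ 2 / (4 * d.μ) * k * Q :=
    mul_le_mul_of_nonneg_left (hint s t ht) (by positivity)
  linarith [s.initial_π_le y hy]

lemma exists_π_sq_add_G_sq_le (d : FlowData) :
    ∃ k > 0, ∀ (s : FluxSolution d), ∀ y ∈ d.space, ∀ t ∈ d.time,
      s.π y t ^ 2 + s.G y t ^ 2 ≤ k * √(1 + s.dissipation t) := by
  obtain ⟨k, hk, hG⟩ := exists_G_sq_le_sqrt d
  obtain ⟨M, hM, hπ⟩ := exists_π_le d
  refine ⟨M ^ 2 + k, by positivity, fun s y hy t ht => ?_⟩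
  have hπ_sq : s.π y t ^ 2 ≤ M ^ 2 * √(1 + s.dissipation t) :=
    (pow_le_pow_left₀ (s.π_nonneg hy ht) (hπ s y hy t ht) 2).trans
      (le_mul_of_one_le_right (by positivity) (s.one_le_sqrt_one_add_dissipation t))
  linarith [hG s y hy t ht]

lemma exists_J_le (d : FlowData) :
    ∃ M > 0, ∀ (s : FluxSolution d), ∀ y ∈ d.space, ∀ t ∈ d.time, s.J y t ≤ M := by
  have hμ := d.μ_pos
  have hJbar := d.Jbar_pos
  obtain ⟨k, hk, hπG⟩ := exists_π_sq_add_G_sq_le d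
  obtain ⟨Q, -, hint⟩ := exists_integral_sqrt_dissipation_le d
  refine ⟨d.Jbar * Real.exp ((1 + k) / d.μ * Q), by positivity, fun s y hy t ht => ?_⟩
  have hcmp := sub_le_sub_of_hasDerivWithinAt_le (f := fun t => Real.log (s.J y t))
    (g := fun t => (1 + k) / d.μ * ∫ r in 0..t, √(1 + s.dissipation r))
    (fun t ht => s.log_J_hasDeriv hy ht)
    (fun t _ => (hasDerivWithinAt_integral_right (by fun_prop) _).const_mul _)
    (fun t ht => by
      rw [div_mul_eq_mul_div]
      gcongr
      nlinarith [sq_nonneg (s.G y t - 1), sq_nonneg (s.π y t - 1), hπG s y hy t ht,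
        s.one_le_sqrt_one_add_dissipation t]) ht
  rw [intervalIntegral.integral_same] at hcmp
  have hinitial : Real.log (s.J y 0) ≤ Real.log d.Jbar :=
    Real.log_le_log (s.J_pos y 0) (s.initial_J_le y hy)
  have hQ_le : (1 + k) / d.μ * (∫ r in 0..t, √(1 + s.dissipation r)) ≤ (1 + k) / d.μ * Q :=
    mul_le_mul_of_nonneg_left (hint s t ht) (by positivity)
  rw [← Real.exp_log hJbar, ← Real.exp_add, ← Real.log_le_iff_le_exp (s.J_pos y t)]
  linarith

end UpperBounds

section Gradient

/-- The squared `L²` norm of the gradients of `J` and `π`. -/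
def gradientEnergy {d : FlowData} (s : FluxSolution d) (t : ℝ) : ℝ :=
  ∫ y in 0..d.L, (s.Jy y t ^ 2 + s.πy y t ^ 2)

lemma gradientEnergy_nonneg {d : FlowData} (s : FluxSolution d) (t : ℝ) : 0 ≤ s.gradientEnergy t :=
  intervalIntegral.integral_nonneg d.L_pos.le fun _ _ => by positivity

lemma integral_ρ_mul_vt_sq_le {d : FlowData} (s : FluxSolution d) (t : ℝ) :
    ∫ y in 0..d.L, (s.ρ y * s.vt y t) ^ 2 ≤ d.ρbar * s.dissipation t := by
  rw [dissipation, ← intervalIntegral.integral_const_mul]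
  refine integral_mono_of_continuous d.L_pos.le (by fun_prop) (by fun_prop) fun y _ => ?_
  calc (s.ρ y * s.vt y t) ^ 2 = s.ρ y * (s.ρ y * s.vt y t ^ 2) := by ring
    _ ≤ d.ρbar * (s.ρ y * s.vt y t ^ 2) :=
        mul_le_mul_of_nonneg_right (s.ρ_le y) (mul_nonneg (s.ρ_nonneg y) (sq_nonneg _))

lemma integral_le_of_le_gradient_add_force {d : FlowData} (s : FluxSolution d) {f : ℝ → ℝ}
    {p q t : ℝ} (hq : 0 ≤ q) (hf : Continuous f)
    (hle : ∀ y ∈ d.space,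
      f y ≤ p * (s.Jy y t ^ 2 + s.πy y t ^ 2) + q * (s.ρ y * s.vt y t) ^ 2) :
    ∫ y in 0..d.L, f y ≤ p * s.gradientEnergy t + q * (d.ρbar * s.dissipation t) :=
  calc ∫ y in 0..d.L, f y
      ≤ ∫ y in 0..d.L, (p * (s.Jy y t ^ 2 + s.πy y t ^ 2) + q * (s.ρ y * s.vt y t) ^ 2) :=
        integral_mono_of_continuous d.L_pos.le hf (by fun_prop) hle
    _ = p * s.gradientEnergy t + q * ∫ y in 0..d.L, (s.ρ y * s.vt y t) ^ 2 :=
        integral_linear_combination (by fun_prop) (by fun_prop) p q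
    _ ≤ _ := by
        gcongr
        exact s.integral_ρ_mul_vt_sq_le t

lemma gradientEnergy_hasDeriv {d : FlowData} (s : FluxSolution d) {t : ℝ} (ht : t ∈ d.time) :
    HasDerivWithinAt s.gradientEnergy
      (∫ y in 0..d.L, (2 * s.Jy y t * s.vyy y t + 2 * s.πy y t * s.πyt y t)) d.time t :=
  d.hasDerivWithinAt_integral (f := fun y t => s.Jy y t ^ 2 + s.πy y t ^ 2)
    (f' := fun y t => 2 * s.Jy y t * s.vyy y t + 2 * s.πy y t * s.πyt y t)
    (by fun_prop) (by fun_prop)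
    (fun y hy t ht =>
      (((s.Jy_hasDeriv y hy t ht).pow 2).add ((s.πy_hasDeriv y hy t ht).pow 2)).congr_deriv
        (by simp [FluxEvolution.vyy, FluxEvolution.πyt])) ht

lemma gradientEnergy_zero_le {d : FlowData} (s : FluxSolution d) :
    s.gradientEnergy 0 ≤ 2 * d.D ^ 2 := by
  rw [gradientEnergy, intervalIntegral.integral_add
    (Continuous.intervalIntegrable (by fun_prop) _ _)
    (Continuous.intervalIntegrable (by fun_prop) _ _)]
  linarith [s.integral_initial_Jy_sq_le, s.integral_initial_πy_sq_le]

lemma exists_vyy_sq_le (d : FlowData) :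
    ∃ C > 0, ∀ (s : FluxSolution d), ∀ y ∈ d.space, ∀ t ∈ d.time,
      s.vyy y t ^ 2 ≤ C * √(1 + s.dissipation t) * (s.Jy y t ^ 2 + s.πy y t ^ 2)
        + C * (s.ρ y * s.vt y t) ^ 2 := by
  have hμ := d.μ_pos
  obtain ⟨k, hk, hπG⟩ := exists_π_sq_add_G_sq_le d
  obtain ⟨M, hM, hJ⟩ := exists_J_le d
  refine ⟨4 / d.μ ^ 2 * (k + M ^ 2), by positivity, fun s y hy t ht => ?_⟩
  have hz := s.one_le_sqrt_one_add_dissipation t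
  have hJ_sq : s.J y t ^ 2 ≤ M ^ 2 := pow_le_pow_left₀ (s.J_pos y t).le (hJ s y hy t ht) 2
  set z := √(1 + s.dissipation t)
  calc s.vyy y t ^ 2
      ≤ 4 / d.μ ^ 2 * ((s.π y t ^ 2 + s.G y t ^ 2) * s.Jy y t ^ 2
          + s.J y t ^ 2 * (s.πy y t ^ 2 + (s.ρ y * s.vt y t) ^ 2)) := volumeGradRate_sq_le ..
    _ ≤ 4 / d.μ ^ 2 * (k * z * s.Jy y t ^ 2
          + M ^ 2 * (z * s.πy y t ^ 2 + (s.ρ y * s.vt y t) ^ 2)) := by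
        gcongr
        · exact hπG s y hy t ht
        · exact le_mul_of_one_le_left (sq_nonneg _) hz
    _ ≤ 4 / d.μ ^ 2 * ((k + M ^ 2) * z * (s.Jy y t ^ 2 + s.πy y t ^ 2)
          + (k + M ^ 2) * (s.ρ y * s.vt y t) ^ 2) := by
        gcongr ?_ * ?_
        have : 0 ≤ M ^ 2 * z * s.Jy y t ^ 2 := by positivity
        have : 0 ≤ k * z * s.πy y t ^ 2 := by positivity
        have : 0 ≤ k * (s.ρ y * s.vt y t) ^ 2 := by positivity
        linarith
    _ = _ := by ring

lemma exists_two_mul_πy_mul_πyt_le (d : FlowData) :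
    ∃ C > 0, ∀ (s : FluxSolution d), ∀ y ∈ d.space, ∀ t ∈ d.time,
      2 * s.πy y t * s.πyt y t
        ≤ C * √(1 + s.dissipation t) * s.πy y t ^ 2 + C * (s.ρ y * s.vt y t) ^ 2 := by
  have hμ := d.μ_pos
  have hγ := zero_lt_one.trans d.one_lt_γ
  obtain ⟨k, hk, hπG⟩ := exists_π_sq_add_G_sq_le d
  refine ⟨(1 + 10 * d.γ ^ 2 * k) / d.μ, by positivity, fun s y hy t ht => ?_⟩
  have hz := s.one_le_sqrt_one_add_dissipation t
  set z := √(1 + s.dissipation t)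
  calc 2 * s.πy y t * s.πyt y t
      ≤ ((1 + 10 * d.γ ^ 2 * (s.π y t ^ 2 + s.G y t ^ 2)) * s.πy y t ^ 2
          + (s.ρ y * s.vt y t) ^ 2) / d.μ := two_mul_mul_pressureGradRate_le d.one_lt_γ.le hμ
    _ ≤ ((z + 10 * d.γ ^ 2 * (k * z)) * s.πy y t ^ 2
          + (1 + 10 * d.γ ^ 2 * k) * (s.ρ y * s.vt y t) ^ 2) / d.μ := by
        gcongr
        · exact hπG s y hy t ht
        · exact le_mul_of_one_le_left (sq_nonneg _) (le_add_of_nonneg_right (by positivity))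
    _ = _ := by ring

lemma exists_gradientEnergy_deriv_le (d : FlowData) :
    ∃ A > 0, ∀ (s : FluxSolution d), ∀ t ∈ d.time,
      ∫ y in 0..d.L, (2 * s.Jy y t * s.vyy y t + 2 * s.πy y t * s.πyt y t)
        ≤ A * √(1 + s.dissipation t) * s.gradientEnergy t + A * (d.ρbar * s.dissipation t) := by
  obtain ⟨C₁, hC₁, hvyy⟩ := exists_vyy_sq_le d
  obtain ⟨C₂, hC₂, hπyt⟩ := exists_two_mul_πy_mul_πyt_le d
  refine ⟨1 + C₁ + C₂, by positivity, fun s t ht =>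
    s.integral_le_of_le_gradient_add_force (by positivity) (by fun_prop) fun y hy => ?_⟩
  have hz := s.one_le_sqrt_one_add_dissipation t
  have hyoung := two_mul_le_add_sq (s.Jy y t) (s.vyy y t)
  have hJy := le_mul_of_one_le_left (sq_nonneg (s.Jy y t)) hz
  have hV := hvyy s y hy t ht
  have hW := hπyt s y hy t ht
  set z := √(1 + s.dissipation t)
  have : 0 ≤ C₂ * z * s.Jy y t ^ 2 := by positivity
  have : 0 ≤ z * s.πy y t ^ 2 := by positivity
  have : 0 ≤ (s.ρ y * s.vt y t) ^ 2 := sq_nonneg _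
  linarith

lemma exists_gradientEnergy_le (d : FlowData) :
    ∃ M > 0, ∀ (s : FluxSolution d), ∀ t ∈ d.time, s.gradientEnergy t ≤ M := by
  have hρ := d.ρbar_pos
  obtain ⟨A, hA, hderiv⟩ := exists_gradientEnergy_deriv_le d
  obtain ⟨Q, -, hint⟩ := exists_integral_sqrt_dissipation_le d
  obtain ⟨R, hR, hY_le⟩ := exists_integral_dissipation_le d
  refine ⟨Real.exp (A * Q) * (2 * d.D ^ 2 + A * d.ρbar * R), by positivity, fun s t ht => ?_⟩
  have := s.continuous_dissipation
  have := s.gradientEnergy_nonneg 0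
  have hY0 : 0 ≤ ∫ r in 0..t, s.dissipation r :=
    intervalIntegral.integral_nonneg ht.1 fun r _ => s.dissipation_nonneg r
  have hgronwall := le_exp_integral_mul_of_hasDerivWithinAt_le
    (p := fun t => A * √(1 + s.dissipation t)) (q := fun t => A * d.ρbar * s.dissipation t)
    (by fun_prop) (by fun_prop) (fun t _ => by positivity)
    (fun t _ => mul_nonneg (by positivity) (s.dissipation_nonneg t))
    (fun t ht => s.gradientEnergy_hasDeriv ht)
    (fun t ht => (hderiv s t ht).trans_eq (by ring)) ht
  rw [intervalIntegral.integral_const_mul, intervalIntegral.integral_const_mul] at hgronwall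
  refine hgronwall.trans ?_
  gcongr
  · exact hint s t ht
  · exact s.gradientEnergy_zero_le
  · exact hY_le s t ht

end Gradient

section SecondOrder

lemma exists_integral_vy_sq_le (d : FlowData) :
    ∃ C > 0, ∀ (s : FluxSolution d), ∀ t ∈ d.time, ∫ y in 0..d.L, s.vy y t ^ 2 ≤ C := by
  have hμ := d.μ_pos
  have hL := d.L_pos
  obtain ⟨X, hX, hX_le⟩ := exists_fluxEnergy_le d
  obtain ⟨M, hM, hJ⟩ := exists_J_le d
  obtain ⟨N, hN, hπ⟩ := exists_π_le d
  refine ⟨2 / d.μ ^ 2 * M * X + 2 / d.μ ^ 2 * (M ^ 2 * N ^ 2) * d.L, by positivity,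
    fun s t ht => ?_⟩
  calc ∫ y in 0..d.L, s.vy y t ^ 2
      ≤ ∫ y in 0..d.L, (2 / d.μ ^ 2 * M * (s.J y t * s.G y t ^ 2)
          + 2 / d.μ ^ 2 * (M ^ 2 * N ^ 2) * 1) := by
        refine integral_mono_of_continuous hL.le (by fun_prop) (by fun_prop) fun y hy => ?_
        refine (volumeRate_sq_le ..).trans ?_
        have hJ0 := (s.J_pos y t).le
        have hπ0 := s.π_nonneg hy ht
        rw [mul_one, mul_assoc _ M, ← mul_add]
        gcongr
        · exact hJ s y hy t ht
        · exact hJ s y hy t ht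
        · exact hπ s y hy t ht
    _ = 2 / d.μ ^ 2 * M * s.fluxEnergy t + 2 / d.μ ^ 2 * (M ^ 2 * N ^ 2) * d.L := by
        rw [integral_linear_combination (by fun_prop) continuous_const, fluxEnergy]
        simp
    _ ≤ _ := by
        gcongr
        exact hX_le s t ht

lemma exists_integral_vyy_sq_le (d : FlowData) :
    ∃ C > 0, ∀ (s : FluxSolution d), ∀ t ∈ d.time,
      ∫ y in 0..d.L, s.vyy y t ^ 2 ≤ C * (1 + s.dissipation t) := by
  have hρ := d.ρbar_pos
  obtain ⟨S, hS, hS_le⟩ := exists_gradientEnergy_le d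
  obtain ⟨A, hA, hvyy⟩ := exists_vyy_sq_le d
  refine ⟨A * (S + d.ρbar), by positivity, fun s t ht => ?_⟩
  have hY := s.dissipation_nonneg t
  calc ∫ y in 0..d.L, s.vyy y t ^ 2
      ≤ A * √(1 + s.dissipation t) * s.gradientEnergy t + A * (d.ρbar * s.dissipation t) :=
        s.integral_le_of_le_gradient_add_force hA.le (by fun_prop) fun y hy => hvyy s y hy t ht
    _ ≤ A * (1 + s.dissipation t) * S + A * (d.ρbar * (1 + s.dissipation t)) := by
        have := s.gradientEnergy_nonneg t
        gcongr
        · exact s.sqrt_one_add_dissipation_le t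
        · exact hS_le s t ht
        · exact le_add_of_nonneg_left zero_le_one
    _ = _ := by ring

lemma exists_sSup_abs_πt_sq_le (d : FlowData) :
    ∃ C > 0, ∀ (s : FluxSolution d), ∀ t ∈ d.time,
      sSup ((fun y => |s.πt y t|) '' d.space) ^ 2 ≤ C * (1 + s.dissipation t) := by
  have hμ := d.μ_pos
  have hγ := zero_lt_one.trans d.one_lt_γ
  obtain ⟨k, hk, hπG⟩ := exists_π_sq_add_G_sq_le d
  refine ⟨(2 * d.γ * k / d.μ) ^ 2, by positivity, fun s t ht => ?_⟩
  have hπt : ∀ y ∈ d.space, |s.πt y t| ≤ 2 * d.γ * k / d.μ * √(1 + s.dissipation t) := fun y hy =>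
    calc |s.πt y t| ≤ 2 * d.γ * (s.π y t ^ 2 + s.G y t ^ 2) / d.μ :=
          abs_pressureRate_le d.one_lt_γ.le hμ
      _ ≤ 2 * d.γ * (k * √(1 + s.dissipation t)) / d.μ := by
          gcongr
          exact hπG s y hy t ht
      _ = _ := by ring
  calc sSup ((fun y => |s.πt y t|) '' d.space) ^ 2
      ≤ (2 * d.γ * k / d.μ * √(1 + s.dissipation t)) ^ 2 := by
        gcongr
        · exact Real.sSup_nonneg (forall_mem_image.2 fun y _ => abs_nonneg _)
        · exact csSup_le (Nonempty.image _ ⟨0, d.zero_mem_space⟩) (forall_mem_image.2 hπt)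
    _ = (2 * d.γ * k / d.μ) ^ 2 * (1 + s.dissipation t) := by
        rw [mul_pow, Real.sq_sqrt (by linarith [s.dissipation_nonneg t])]

lemma exists_integral_πyt_sq_le (d : FlowData) :
    ∃ C > 0, ∀ (s : FluxSolution d), ∀ t ∈ d.time,
      ∫ y in 0..d.L, s.πyt y t ^ 2 ≤ C * (√(1 + s.dissipation t) * (1 + s.dissipation t)) := by
  have hμ := d.μ_pos
  have hρ := d.ρbar_pos
  have hγ := zero_lt_one.trans d.one_lt_γ
  obtain ⟨k, hk, hπG⟩ := exists_π_sq_add_G_sq_le d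
  obtain ⟨S, hS, hS_le⟩ := exists_gradientEnergy_le d
  refine ⟨10 * d.γ ^ 2 * k / d.μ ^ 2 * (S + d.ρbar), by positivity, fun s t ht => ?_⟩
  have hY := s.dissipation_nonneg t
  set z := √(1 + s.dissipation t)
  let q := 10 * d.γ ^ 2 * (k * z) / d.μ ^ 2
  have hpoint : ∀ y ∈ d.space, s.πyt y t ^ 2
      ≤ q * (s.Jy y t ^ 2 + s.πy y t ^ 2) + q * (s.ρ y * s.vt y t) ^ 2 := fun y hy => by
    refine (pressureGradRate_sq_le d.one_lt_γ.le).trans ?_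
    rw [← mul_add]
    unfold q
    gcongr
    · exact hπG s y hy t ht
    · exact le_add_of_nonneg_left (sq_nonneg _)
  calc ∫ y in 0..d.L, s.πyt y t ^ 2 ≤ q * s.gradientEnergy t + q * (d.ρbar * s.dissipation t) :=
        s.integral_le_of_le_gradient_add_force (by positivity) (by fun_prop) hpoint
    _ ≤ q * (S * (1 + s.dissipation t)) + q * (d.ρbar * (1 + s.dissipation t)) := by
        gcongr
        · exact (hS_le s t ht).trans (le_mul_of_one_le_right hS.le (le_add_of_nonneg_right hY))
        · exact le_add_of_nonneg_left zero_le_one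
    _ = _ := by ring

lemma sqrt_mul_self_rpow_two_thirds {z : ℝ} (hz : 0 ≤ z) : (√z * z) ^ (2 / 3 : ℝ) = z := by
  rw [Real.sqrt_eq_rpow, ← Real.rpow_add_one' hz (by norm_num), ← Real.rpow_mul hz]
  norm_num

lemma exists_integral_πyt_sq_rpow_le (d : FlowData) :
    ∃ C > 0, ∀ (s : FluxSolution d), ∀ t ∈ d.time,
      (∫ y in 0..d.L, s.πyt y t ^ 2) ^ (2 / 3 : ℝ) ≤ C * (1 + s.dissipation t) := by
  obtain ⟨C, hC, hπyt⟩ := exists_integral_πyt_sq_le d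
  refine ⟨C ^ (2 / 3 : ℝ), by positivity, fun s t ht => ?_⟩
  have hz : 0 ≤ 1 + s.dissipation t := by linarith [s.dissipation_nonneg t]
  calc (∫ y in 0..d.L, s.πyt y t ^ 2) ^ (2 / 3 : ℝ)
      ≤ (C * (√(1 + s.dissipation t) * (1 + s.dissipation t))) ^ (2 / 3 : ℝ) :=
        Real.rpow_le_rpow (intervalIntegral.integral_nonneg d.L_pos.le fun _ _ => sq_nonneg _)
          (hπyt s t ht) (by norm_num)
    _ = C ^ (2 / 3 : ℝ) * (1 + s.dissipation t) := by
        rw [Real.mul_rpow hC.le (by positivity), sqrt_mul_self_rpow_two_thirds hz]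

/-- The sum of the time-integrated norms in the second order estimate, at time `t`; the two
occurrences of `vyy` stand for `∂_y² v` and `∂_y ∂ₜJ`. -/
def secondOrderNorm {d : FlowData} (s : FluxSolution d) (t : ℝ) : ℝ :=
  s.dissipation t + (∫ y in 0..d.L, s.vyy y t ^ 2) + (∫ y in 0..d.L, s.vyy y t ^ 2)
    + sSup ((fun y => |s.πt y t|) '' d.space) ^ 2 + (∫ y in 0..d.L, s.πyt y t ^ 2) ^ (2 / 3 : ℝ)

lemma continuous_secondOrderNorm {d : FlowData} (s : FluxSolution d) :
    Continuous s.secondOrderNorm := by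
  have hvyy : Continuous fun t => ∫ y in 0..d.L, s.vyy y t ^ 2 :=
    continuous_integral_of_continuous (by fun_prop)
  have hπyt : Continuous fun t => ∫ y in 0..d.L, s.πyt y t ^ 2 :=
    continuous_integral_of_continuous (by fun_prop)
  have hπt : Continuous fun t => sSup ((fun y => |s.πt y t|) '' d.space) :=
    isCompact_Icc.continuous_sSup (f := fun t y => |s.πt y t|) (by fun_prop)
  exact (((s.continuous_dissipation.add hvyy).add hvyy).add (hπt.pow 2)).add
    (hπyt.rpow_const fun _ => .inr (by norm_num))

lemma exists_integral_secondOrderNorm_le (d : FlowData) :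
    ∃ C > 0, ∀ s : FluxSolution d, ∫ t in 0..d.T, s.secondOrderNorm t ≤ C := by
  have hT := d.T_pos
  obtain ⟨R, hR, hY_le⟩ := exists_integral_dissipation_le d
  obtain ⟨A₁, hA₁, hvyy⟩ := exists_integral_vyy_sq_le d
  obtain ⟨A₂, hA₂, hπt⟩ := exists_sSup_abs_πt_sq_le d
  obtain ⟨A₃, hA₃, hπyt⟩ := exists_integral_πyt_sq_rpow_le d
  let A := 1 + 2 * A₁ + A₂ + A₃
  refine ⟨A * d.T + A * R, by positivity, fun s => ?_⟩
  have hY := s.continuous_dissipation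
  calc ∫ t in 0..d.T, s.secondOrderNorm t ≤ ∫ t in 0..d.T, (A * 1 + A * s.dissipation t) := by
        refine integral_mono_of_continuous hT.le s.continuous_secondOrderNorm (by fun_prop)
          fun t ht => ?_
        simp only [secondOrderNorm, A]
        linarith [hvyy s t ht, hπt s t ht, hπyt s t ht, s.dissipation_nonneg t]
    _ = A * d.T + A * ∫ t in 0..d.T, s.dissipation t := by
        rw [integral_linear_combination continuous_const hY]
        simp
    _ ≤ A * d.T + A * R := by
        gcongr
        exact hY_le s d.T d.T_mem_time

end SecondOrder

end FluxSolution

namespace FlowData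

variable (d : FlowData) {f ft fy fyt : ℝ → ℝ → ℝ} {y t : ℝ}

/-- The continuous extension of a function on `[0, L] × [0, T]` that is constant outwards along
both coordinates. -/
def extend (f : ℝ → ℝ → ℝ) (y t : ℝ) : ℝ :=
  f (projIcc 0 d.L d.L_pos.le y) (projIcc 0 d.T d.T_pos.le t)

lemma continuous_extend (hf : ContinuousOn (Function.uncurry f) (d.space ×ˢ d.time)) :
    Continuous (Function.uncurry (d.extend f)) :=
  hf.comp_continuous
    (f := fun p : ℝ × ℝ => ((projIcc 0 d.L d.L_pos.le p.1 : ℝ), (projIcc 0 d.T d.T_pos.le p.2 : ℝ)))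
    (by fun_prop) fun _ => ⟨Subtype.coe_prop _, Subtype.coe_prop _⟩

variable {d}

lemma extend_apply (hy : y ∈ d.space) (ht : t ∈ d.time) : d.extend f y t = f y t := by
  simp only [extend, projIcc_of_mem _ hy, projIcc_of_mem _ ht]

lemma hasDerivWithinAt_extend_time {f' : ℝ} (hy : y ∈ d.space) (ht : t ∈ d.time)
    (hf : HasDerivWithinAt (f y) f' d.time t) : HasDerivWithinAt (d.extend f y) f' d.time t :=
  hf.congr_of_mem (fun _ hs => extend_apply hy hs) ht

lemma hasDerivWithinAt_extend_space {f' : ℝ} (hy : y ∈ d.space) (ht : t ∈ d.time)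
    (hf : HasDerivWithinAt (f · t) f' d.space y) :
    HasDerivWithinAt (d.extend f · t) f' d.space y :=
  hf.congr_of_mem (fun _ hx => extend_apply hx ht) hy

lemma hasDerivWithinAt_swap_of_continuousOn
    (hftc : ContinuousOn (Function.uncurry ft) (d.space ×ˢ d.time))
    (hfytc : ContinuousOn (Function.uncurry fyt) (d.space ×ˢ d.time))
    (hft : ∀ y ∈ d.space, ∀ t ∈ d.time, HasDerivWithinAt (f y) (ft y t) d.time t)
    (hfy : ∀ y ∈ d.space, ∀ t ∈ d.time, HasDerivWithinAt (f · t) (fy y t) d.space y)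
    (hfyt : ∀ y ∈ d.space, ∀ t ∈ d.time, HasDerivWithinAt (ft · t) (fyt y t) d.space y)
    (hy : y ∈ d.space) (ht : t ∈ d.time) : HasDerivWithinAt (fy y) (fyt y t) d.time t := by
  rw [← extend_apply (f := fyt) hy ht]
  refine hasDerivWithinAt_swap d.L_pos (d.continuous_extend hftc) (d.continuous_extend hfytc)
    (fun x hx s hs => ?_) (hfy y hy) (fun x hx s hs => ?_) hy ht
  · exact (hft x hx s hs).congr_deriv (extend_apply hx hs).symm
  · exact hasDerivWithinAt_extend_space hx hs
      ((hfyt x hx s hs).congr_deriv (extend_apply hx hs).symm)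

lemma integral_congr {f g : ℝ → ℝ} (hfg : EqOn f g d.space) :
    ∫ y in 0..d.L, f y = ∫ y in 0..d.L, g y :=
  intervalIntegral.integral_congr (by rwa [uIcc_of_le d.L_pos.le])

end FlowData

/-- The effective viscous flux `G = μ (∂_y v) / J - π`. -/
def viscousFlux (μ : ℝ) (J vy π : ℝ → ℝ → ℝ) (y t : ℝ) : ℝ := μ * vy y t / J y t - π y t

namespace ClassicalSolution

open FlowData

variable {L T μ γ : ℝ} {ρ₀ : ℝ → ℝ} {J v π Jt vy vt w πy πt Jy : ℝ → ℝ → ℝ} {y t : ℝ}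

section Rates

variable (cs : ClassicalSolution L T μ γ ρ₀ J v π Jt vy vt w πy πt)
include cs

lemma continuousOn_viscousFlux :
    ContinuousOn (Function.uncurry (viscousFlux μ J vy π)) (Icc 0 L ×ˢ Icc 0 T) :=
  ((continuousOn_const.mul cs.contvy).div cs.contJ
    fun p hp => (cs.Jpos p.1 hp.1 p.2 hp.2).ne').sub cs.contPi

lemma viscousFlux_hasDeriv_space (hy : y ∈ Icc 0 L) (ht : t ∈ Icc 0 T) :
    HasDerivWithinAt (viscousFlux μ J vy π · t) (ρ₀ y * vt y t) (Icc 0 L) y := by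
  simp only [viscousFlux, mul_div_assoc]
  exact (((cs.hw y hy t ht).const_mul μ).sub (cs.hPiy y hy t ht)).congr_deriv
    (by linarith [cs.eq2 y hy t ht])

lemma vy_eq_volumeRate (hμ : μ ≠ 0) (hy : y ∈ Icc 0 L) (ht : t ∈ Icc 0 T) :
    vy y t = volumeRate μ (J y t) (π y t) (viscousFlux μ J vy π y t) := by
  have := (cs.Jpos y hy t ht).ne'
  unfold volumeRate viscousFlux
  field_simp
  ring

lemma πt_eq_pressureRate (hμ : μ ≠ 0) (hy : y ∈ Icc 0 L) (ht : t ∈ Icc 0 T) :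
    πt y t = pressureRate γ μ (π y t) (viscousFlux μ J vy π y t) := by
  rw [eq_sub_of_add_eq (cs.eq3 y hy t ht), pressureRate, viscousFlux, mul_div_assoc,
    eq_div_iff hμ]
  ring

lemma vy_hasDeriv_space (hμ : μ ≠ 0)
    (hJy : ∀ y ∈ Icc 0 L, ∀ t ∈ Icc 0 T, HasDerivWithinAt (J · t) (Jy y t) (Icc 0 L) y)
    (hy : y ∈ Icc 0 L) (ht : t ∈ Icc 0 T) :
    HasDerivWithinAt (vy · t)
      (volumeGradRate μ (J y t) (π y t) (viscousFlux μ J vy π y t) (Jy y t) (πy y t)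
        (ρ₀ y * vt y t)) (Icc 0 L) y :=
  ((((hJy y hy t ht).mul ((cs.viscousFlux_hasDeriv_space hy ht).add
    (cs.hPiy y hy t ht))).div_const μ).congr_of_mem
      (fun _ hx => cs.vy_eq_volumeRate hμ hx ht) hy)

lemma πt_hasDeriv_space (hμ : μ ≠ 0) (hy : y ∈ Icc 0 L) (ht : t ∈ Icc 0 T) :
    HasDerivWithinAt (πt · t)
      (pressureGradRate γ μ (π y t) (viscousFlux μ J vy π y t) (πy y t) (ρ₀ y * vt y t))
      (Icc 0 L) y := by
  have hπ := cs.hPiy y hy t ht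
  have hG := cs.viscousFlux_hasDeriv_space hy ht
  refine ((((hπ.pow 2).neg.add ((hπ.mul hG).const_mul (γ - 2))).add
    ((hG.pow 2).const_mul (γ - 1))).div_const μ).congr_of_mem
      (fun _ hx => cs.πt_eq_pressureRate hμ hx ht) hy |>.congr_deriv ?_
  simp [pressureGradRate]

end Rates

section Extension

variable {d : FlowData}
  (cs : ClassicalSolution d.L d.T d.μ d.γ ρ₀ J v π Jt vy vt w πy πt)
include cs

lemma initial_π_le (hP : sSup ((fun y => |π y 0|) '' d.space) ≤ d.P) (hy : y ∈ d.space) :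
    π y 0 ≤ d.P := by
  have hπ : ContinuousOn (fun y => |π y 0|) d.space :=
    (cs.contPi.comp (f := fun y => (y, 0)) (by fun_prop) fun y hy => ⟨hy, d.zero_mem_time⟩).abs
  exact (le_abs_self _).trans
    ((le_csSup (isCompact_Icc.bddAbove_image hπ) (mem_image_of_mem _ hy)).trans hP)

lemma Jy_hasDeriv (hρ₀ : ContinuousOn ρ₀ d.space)
    (hJy : ∀ y ∈ d.space, ∀ t ∈ d.time, HasDerivWithinAt (J · t) (Jy y t) d.space y)
    (hJyc : ContinuousOn (Function.uncurry Jy) (d.space ×ˢ d.time))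
    (hy : y ∈ d.space) (ht : t ∈ d.time) :
    HasDerivWithinAt (Jy y)
      (volumeGradRate d.μ (J y t) (π y t) (viscousFlux d.μ J vy π y t) (Jy y t) (πy y t)
        (ρ₀ y * vt y t)) d.time t := by
  refine FlowData.hasDerivWithinAt_swap_of_continuousOn (f := J) (ft := vy)
    (fyt := fun y t => volumeGradRate d.μ (J y t) (π y t) (viscousFlux d.μ J vy π y t) (Jy y t)
      (πy y t) (ρ₀ y * vt y t)) cs.contvy ?_
    (fun y hy t ht => (cs.hJt y hy t ht).congr_deriv (cs.eq1 y hy t ht)) hJy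
    (fun y hy t ht => cs.vy_hasDeriv_space d.μ_pos.ne' hJy hy ht) hy ht
  have hρ : ContinuousOn (fun p : ℝ × ℝ => ρ₀ p.1) (d.space ×ˢ d.time) :=
    hρ₀.comp continuousOn_fst fun p hp => hp.1
  exact ((hJyc.mul (cs.continuousOn_viscousFlux.add cs.contPi)).add
    (cs.contJ.mul ((hρ.mul cs.contvt).add cs.contPiy))).div_const _

lemma πy_hasDeriv (hρ₀ : ContinuousOn ρ₀ d.space) (hy : y ∈ d.space) (ht : t ∈ d.time) :
    HasDerivWithinAt (πy y)
      (pressureGradRate d.γ d.μ (π y t) (viscousFlux d.μ J vy π y t) (πy y t) (ρ₀ y * vt y t))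
      d.time t := by
  refine FlowData.hasDerivWithinAt_swap_of_continuousOn (f := π) (ft := πt)
    (fyt := fun y t => pressureGradRate d.γ d.μ (π y t) (viscousFlux d.μ J vy π y t) (πy y t)
      (ρ₀ y * vt y t)) cs.contPit ?_ cs.hPit cs.hPiy
    (fun y hy t ht => cs.πt_hasDeriv_space d.μ_pos.ne' hy ht) hy ht
  have hρ : ContinuousOn (fun p : ℝ × ℝ => ρ₀ p.1) (d.space ×ˢ d.time) :=
    hρ₀.comp continuousOn_fst fun p hp => hp.1
  have hr := hρ.mul cs.contvt
  have hG := cs.continuousOn_viscousFlux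
  exact (((((continuousOn_const (c := (2 : ℝ))).mul cs.contPi).mul cs.contPiy).neg.add
    ((continuousOn_const (c := d.γ - 2)).mul ((cs.contPiy.mul hG).add (cs.contPi.mul hr)))).add
    ((continuousOn_const (c := d.γ - 1)).mul
      (((continuousOn_const (c := (2 : ℝ))).mul hG).mul hr))).div_const _

/-- The continuous extension of a classical solution to the plane, as a solution of the first order
system. -/
def toFluxEvolution (hρ₀ : ContinuousOn ρ₀ d.space)
    (hρ₀_bounds : ∀ y ∈ d.space, 0 ≤ ρ₀ y ∧ ρ₀ y ≤ d.ρbar)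
    (hJy : ∀ y ∈ d.space, ∀ t ∈ d.time, HasDerivWithinAt (J · t) (Jy y t) d.space y)
    (hJyc : ContinuousOn (Function.uncurry Jy) (d.space ×ˢ d.time)) : FluxEvolution d where
  ρ y := ρ₀ (projIcc 0 d.L d.L_pos.le y)
  J := d.extend J
  v := d.extend v
  π := d.extend π
  G := d.extend (viscousFlux d.μ J vy π)
  vt := d.extend vt
  Jy := d.extend Jy
  πy := d.extend πy
  ρ_cont := hρ₀.comp_continuous (by fun_prop) fun _ => Subtype.coe_prop _
  J_cont := d.continuous_extend cs.contJ
  v_cont := d.continuous_extend cs.contv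
  π_cont := d.continuous_extend cs.contPi
  G_cont := d.continuous_extend cs.continuousOn_viscousFlux
  vt_cont := d.continuous_extend cs.contvt
  Jy_cont := d.continuous_extend hJyc
  πy_cont := d.continuous_extend cs.contPiy
  ρ_nonneg _ := (hρ₀_bounds _ (Subtype.coe_prop _)).1
  ρ_le _ := (hρ₀_bounds _ (Subtype.coe_prop _)).2
  J_pos _ _ := cs.Jpos _ (Subtype.coe_prop _) _ (Subtype.coe_prop _)
  J_hasDeriv y hy t ht := by
    simp only [extend_apply hy ht, ← cs.vy_eq_volumeRate d.μ_pos.ne' hy ht, ← cs.eq1 y hy t ht]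
    exact hasDerivWithinAt_extend_time hy ht (cs.hJt y hy t ht)
  v_hasDeriv y hy t ht := by
    simpa only [extend_apply hy ht] using hasDerivWithinAt_extend_time hy ht (cs.hvt y hy t ht)
  π_hasDeriv y hy t ht := by
    simp only [extend_apply hy ht, ← cs.πt_eq_pressureRate d.μ_pos.ne' hy ht]
    exact hasDerivWithinAt_extend_time hy ht (cs.hPit y hy t ht)
  v_hasDeriv_space y hy t ht := by
    simp only [extend_apply hy ht, ← cs.vy_eq_volumeRate d.μ_pos.ne' hy ht]
    exact hasDerivWithinAt_extend_space hy ht (cs.hvy y hy t ht)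
  G_hasDeriv_space y hy t ht := by
    simp only [extend_apply hy ht, projIcc_of_mem _ hy]
    exact hasDerivWithinAt_extend_space hy ht (cs.viscousFlux_hasDeriv_space hy ht)
  Jy_hasDeriv y hy t ht := by
    simp only [extend_apply hy ht, projIcc_of_mem _ hy]
    exact hasDerivWithinAt_extend_time hy ht (cs.Jy_hasDeriv hρ₀ hJy hJyc hy ht)
  πy_hasDeriv y hy t ht := by
    simp only [extend_apply hy ht, projIcc_of_mem _ hy]
    exact hasDerivWithinAt_extend_time hy ht (cs.πy_hasDeriv hρ₀ hy ht)

section Rates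

variable {hρ₀ : ContinuousOn ρ₀ d.space}
  {hρ₀_bounds : ∀ y ∈ d.space, 0 ≤ ρ₀ y ∧ ρ₀ y ≤ d.ρbar}
  {hJy : ∀ y ∈ d.space, ∀ t ∈ d.time, HasDerivWithinAt (J · t) (Jy y t) d.space y}
  {hJyc : ContinuousOn (Function.uncurry Jy) (d.space ×ˢ d.time)}
  (hy : y ∈ d.space) (ht : t ∈ d.time)
include hy ht

lemma toFluxEvolution_vy : (cs.toFluxEvolution hρ₀ hρ₀_bounds hJy hJyc).vy y t = vy y t := by
  simp only [FluxEvolution.vy, toFluxEvolution, extend_apply hy ht,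
    ← cs.vy_eq_volumeRate d.μ_pos.ne' hy ht]

lemma toFluxEvolution_πt : (cs.toFluxEvolution hρ₀ hρ₀_bounds hJy hJyc).πt y t = πt y t := by
  simp only [FluxEvolution.πt, toFluxEvolution, extend_apply hy ht,
    ← cs.πt_eq_pressureRate d.μ_pos.ne' hy ht]

lemma toFluxEvolution_vyy {vyy : ℝ} (hvyy : HasDerivWithinAt (vy · t) vyy d.space y) :
    (cs.toFluxEvolution hρ₀ hρ₀_bounds hJy hJyc).vyy y t = vyy := by
  simp only [FluxEvolution.vyy, toFluxEvolution, extend_apply hy ht, projIcc_of_mem _ hy]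
  exact (uniqueDiffOn_Icc d.L_pos y hy).eq_deriv _
    (cs.vy_hasDeriv_space d.μ_pos.ne' hJy hy ht) hvyy

lemma toFluxEvolution_πyt {πyt : ℝ} (hπyt : HasDerivWithinAt (πt · t) πyt d.space y) :
    (cs.toFluxEvolution hρ₀ hρ₀_bounds hJy hJyc).πyt y t = πyt := by
  simp only [FluxEvolution.πyt, toFluxEvolution, extend_apply hy ht, projIcc_of_mem _ hy]
  exact (uniqueDiffOn_Icc d.L_pos y hy).eq_deriv _ (cs.πt_hasDeriv_space d.μ_pos.ne' hy ht) hπyt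

end Rates

lemma exists_fluxSolution (hρ₀ : ContinuousOn ρ₀ d.space)
    (hρ₀_bounds : ∀ y ∈ d.space, 0 ≤ ρ₀ y ∧ ρ₀ y ≤ d.ρbar)
    (hJy : ∀ y ∈ d.space, ∀ t ∈ d.time, HasDerivWithinAt (J · t) (Jy y t) d.space y)
    (hJyc : ContinuousOn (Function.uncurry Jy) (d.space ×ˢ d.time))
    (hv : ∀ t ∈ d.time, v 0 t = 0 ∧ v d.L t = 0)
    (hπ₀ : ∀ y ∈ d.space, 0 ≤ π y 0) (hP : sSup ((fun y => |π y 0|) '' d.space) ≤ d.P)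
    (hJ₀ : ∀ y ∈ d.space, d.Jlow ≤ J y 0 ∧ J y 0 ≤ d.Jbar) (hℓ : ∫ y in 0..d.L, J y 0 = d.ℓ)
    (hE : ∫ y in 0..d.L, (ρ₀ y * v y 0 ^ 2 / 2 + J y 0 * π y 0 / (d.γ - 1)) = d.E)
    (hK : √(∫ y in 0..d.L, viscousFlux d.μ J vy π y 0 ^ 2) ≤ d.K)
    (hJy₀ : √(∫ y in 0..d.L, Jy y 0 ^ 2) ≤ d.D) (hπy₀ : √(∫ y in 0..d.L, πy y 0 ^ 2) ≤ d.D) :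
    ∃ s : FluxSolution d, s.toFluxEvolution = cs.toFluxEvolution hρ₀ hρ₀_bounds hJy hJyc := by
  have hinit : ∀ {f : ℝ → ℝ → ℝ} {y : ℝ}, y ∈ d.space → d.extend f y 0 = f y 0 := fun hy =>
    extend_apply hy d.zero_mem_time
  have hsq : ∀ {f : ℝ → ℝ → ℝ} {c : ℝ}, √(∫ y in 0..d.L, f y 0 ^ 2) ≤ c →
      ∫ y in 0..d.L, d.extend f y 0 ^ 2 ≤ c ^ 2 := fun hf =>
    (integral_congr fun y hy => by rw [hinit hy]).trans_le (Real.sqrt_le_iff.1 hf).2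
  exact ⟨
    { cs.toFluxEvolution hρ₀ hρ₀_bounds hJy hJyc with
      v_left := fun t ht => (extend_apply d.zero_mem_space ht).trans (hv t ht).1
      v_right := fun t ht => (extend_apply d.L_mem_space ht).trans (hv t ht).2
      initial_π_nonneg := fun y hy => (hπ₀ y hy).trans_eq (hinit hy).symm
      initial_π_le := fun y hy => (hinit hy).trans_le (cs.initial_π_le hP hy)
      Jlow_le_initial_J := fun y hy => (hJ₀ y hy).1.trans_eq (hinit hy).symm
      initial_J_le := fun y hy => (hinit hy).trans_le (hJ₀ y hy).2
      integral_initial_J := (integral_congr fun y hy => hinit hy).trans hℓ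
      initial_energy := (integral_congr fun y hy => by
        simp only [toFluxEvolution, hinit hy, projIcc_of_mem _ hy]).trans hE
      integral_initial_G_sq_le := hsq hK
      integral_initial_Jy_sq_le := hsq hJy₀
      integral_initial_πy_sq_le := hsq hπy₀ }, rfl⟩

lemma secondOrderNorm_eq {vyy Jyt πyt : ℝ → ℝ → ℝ} {s : FluxSolution d}
    {hρ₀ : ContinuousOn ρ₀ d.space} {hρ₀_bounds : ∀ y ∈ d.space, 0 ≤ ρ₀ y ∧ ρ₀ y ≤ d.ρbar}
    {hJy : ∀ y ∈ d.space, ∀ t ∈ d.time, HasDerivWithinAt (J · t) (Jy y t) d.space y}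
    {hJyc : ContinuousOn (Function.uncurry Jy) (d.space ×ˢ d.time)}
    (hs : s.toFluxEvolution = cs.toFluxEvolution hρ₀ hρ₀_bounds hJy hJyc)
    (ht : t ∈ d.time)
    (hvyy : ∀ y ∈ d.space, HasDerivWithinAt (vy · t) (vyy y t) d.space y)
    (hJyt : ∀ y ∈ d.space, HasDerivWithinAt (Jt · t) (Jyt y t) d.space y)
    (hπyt : ∀ y ∈ d.space, HasDerivWithinAt (πt · t) (πyt y t) d.space y) :
    s.secondOrderNorm t = (∫ y in 0..d.L, ρ₀ y * vt y t ^ 2) + (∫ y in 0..d.L, vyy y t ^ 2)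
      + (∫ y in 0..d.L, Jyt y t ^ 2) + sSup ((fun y => |πt y t|) '' d.space) ^ 2
      + (∫ y in 0..d.L, πyt y t ^ 2) ^ (2 / 3 : ℝ) := by
  have hJyt_vy : ∀ y ∈ d.space, HasDerivWithinAt (vy · t) (Jyt y t) d.space y := fun y hy =>
    (hJyt y hy).congr_of_mem (fun x hx => (cs.eq1 x hx t ht).symm) hy
  have hdissipation : s.dissipation t = ∫ y in 0..d.L, ρ₀ y * vt y t ^ 2 :=
    integral_congr fun y hy => by
      simp only [hs, toFluxEvolution, extend_apply hy ht, projIcc_of_mem _ hy]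
  have hint_vyy : ∫ y in 0..d.L, s.vyy y t ^ 2 = ∫ y in 0..d.L, vyy y t ^ 2 :=
    integral_congr fun y hy => by simp only [hs, cs.toFluxEvolution_vyy hy ht (hvyy y hy)]
  have hint_Jyt : ∫ y in 0..d.L, s.vyy y t ^ 2 = ∫ y in 0..d.L, Jyt y t ^ 2 :=
    integral_congr fun y hy => by simp only [hs, cs.toFluxEvolution_vyy hy ht (hJyt_vy y hy)]
  have himage_πt : (fun y => |s.πt y t|) '' d.space = (fun y => |πt y t|) '' d.space :=
    image_congr fun y hy => by rw [hs, cs.toFluxEvolution_πt hy ht]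
  have hint_πyt : ∫ y in 0..d.L, s.πyt y t ^ 2 = ∫ y in 0..d.L, πyt y t ^ 2 :=
    integral_congr fun y hy => by simp only [hs, cs.toFluxEvolution_πyt hy ht (hπyt y hy)]
  rw [FluxSolution.secondOrderNorm, hdissipation, himage_πt, hint_πyt, ← hint_vyy, ← hint_Jyt]

end Extension

end ClassicalSolution

theorem second_order_estimates_general (d : FlowData) :
    ∃ C > 0, ∀ (ρ₀ : ℝ → ℝ) (J v π Jt vy vt w πy πt Jy vyy Jyt πyt : ℝ → ℝ → ℝ),
      ContinuousOn ρ₀ d.space →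
      (∀ y ∈ d.space, 0 ≤ ρ₀ y ∧ ρ₀ y ≤ d.ρbar) →
      ClassicalSolution d.L d.T d.μ d.γ ρ₀ J v π Jt vy vt w πy πt →
      (∀ y ∈ d.space, ∀ t ∈ d.time, HasDerivWithinAt (J · t) (Jy y t) d.space y) →
      (∀ y ∈ d.space, ∀ t ∈ d.time, HasDerivWithinAt (vy · t) (vyy y t) d.space y) →
      (∀ y ∈ d.space, ∀ t ∈ d.time, HasDerivWithinAt (Jt · t) (Jyt y t) d.space y) →
      (∀ y ∈ d.space, ∀ t ∈ d.time, HasDerivWithinAt (πt · t) (πyt y t) d.space y) →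
      ContinuousOn (Function.uncurry Jy) (d.space ×ˢ d.time) →
      (∀ t ∈ d.time, v 0 t = 0 ∧ v d.L t = 0) →
      (∀ y ∈ d.space, 0 ≤ π y 0) →
      sSup ((fun y => |π y 0|) '' d.space) ≤ d.P →
      (∀ y ∈ d.space, d.Jlow ≤ J y 0 ∧ J y 0 ≤ d.Jbar) →
      ∫ y in 0..d.L, J y 0 = d.ℓ →
      ∫ y in 0..d.L, (ρ₀ y * v y 0 ^ 2 / 2 + J y 0 * π y 0 / (d.γ - 1)) = d.E →
      √(∫ y in 0..d.L, viscousFlux d.μ J vy π y 0 ^ 2) ≤ d.K →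
      √(∫ y in 0..d.L, Jy y 0 ^ 2) + √(∫ y in 0..d.L, πy y 0 ^ 2) ≤ d.D →
      sSup ((fun t => (∫ y in 0..d.L, Jt y t ^ 2) + ∫ y in 0..d.L, vy y t ^ 2) '' d.time)
        + (∫ t in 0..d.T, ((∫ y in 0..d.L, ρ₀ y * vt y t ^ 2) + (∫ y in 0..d.L, vyy y t ^ 2)
            + (∫ y in 0..d.L, Jyt y t ^ 2) + sSup ((fun y => |πt y t|) '' d.space) ^ 2
            + (∫ y in 0..d.L, πyt y t ^ 2) ^ (2 / 3 : ℝ))) ≤ C := by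
  obtain ⟨A, hA, hvy⟩ := FluxSolution.exists_integral_vy_sq_le d
  obtain ⟨B, hB, hnorm⟩ := FluxSolution.exists_integral_secondOrderNorm_le d
  refine ⟨A + A + B, by positivity, fun ρ₀ J v π Jt vy vt w πy πt Jy vyy Jyt πyt hρ₀ hρ₀_bounds cs
    hJy hvyy hJyt hπyt hJyc hv hπ₀ hP hJ₀ hℓ hE hK hD => ?_⟩
  obtain ⟨s, hs⟩ := cs.exists_fluxSolution hρ₀ hρ₀_bounds hJy hJyc hv hπ₀ hP hJ₀ hℓ hE hK
    ((le_add_of_nonneg_right (Real.sqrt_nonneg _)).trans hD)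
    ((le_add_of_nonneg_left (Real.sqrt_nonneg _)).trans hD)
  refine add_le_add (csSup_le (Nonempty.image _ ⟨0, d.zero_mem_time⟩)
    (forall_mem_image.2 fun t ht => ?_)) ((hnorm s).trans_eq' ?_)
  · have hJt : ∫ y in 0..d.L, Jt y t ^ 2 = ∫ y in 0..d.L, vy y t ^ 2 :=
      FlowData.integral_congr fun y hy => by simp only [cs.eq1 y hy t ht]
    have hvy_eq : ∫ y in 0..d.L, vy y t ^ 2 = ∫ y in 0..d.L, s.vy y t ^ 2 :=
      FlowData.integral_congr fun y hy => by simp only [hs, cs.toFluxEvolution_vy hy ht]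
    rw [hJt, hvy_eq]
    exact add_le_add (hvy s t ht) (hvy s t ht)
  · refine intervalIntegral.integral_congr fun t ht => ?_
    rw [uIcc_of_le d.T_pos.le] at ht
    exact cs.secondOrderNorm_eq hs ht (hvyy · · t ht) (hJyt · · t ht) (hπyt · · t ht)

end

/-- (Corollary 2.7: combined second-order a priori estimates.) The
constant `C` depends only on `γ, μ, ρ̄, ℓ₀, J̲, J̄, m₀, ‖π₀‖_∞, E₀, ‖G₀‖₂,
‖∂_y J₀‖₂ + ‖∂_y π₀‖₂` and `T`. Here `vyy = ∂_y² v`, `Jyt = ∂_y ∂ₜ J`,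
`πyt = ∂_y ∂ₜ π`. -/
theorem second_order_estimates
    (L γ μ ρbar ℓ₀ Jlow Jbar m₀ P₀ E₀ K₀ D₀ T : ℝ)
    (hL : 0 < L) (hγ : 1 < γ) (hμ : 0 < μ) (hρbar : 0 < ρbar) (hℓ₀ : 0 < ℓ₀)
    (hJlow : 0 < Jlow) (hJbar : 0 < Jbar) (hm₀ : 0 ≤ m₀) (hP₀ : 0 ≤ P₀)
    (hE₀ : 0 ≤ E₀) (hK₀ : 0 ≤ K₀) (hD₀ : 0 ≤ D₀) (hT : 0 < T) :
    ∃ C > 0, ∀ (ρ₀ ρ₀d : ℝ → ℝ)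
      (J v π Jt vy vt w πy πt Jy vyy Jyt πyt : ℝ → ℝ → ℝ),
      (∀ y ∈ Icc (0:ℝ) L, HasDerivWithinAt ρ₀ (ρ₀d y) (Icc 0 L) y) →
      ContinuousOn ρ₀d (Icc 0 L) →
      (∀ y ∈ Icc (0:ℝ) L, 0 < ρ₀ y ∧ ρ₀ y ≤ ρbar) →
      ClassicalSolution L T μ γ ρ₀ J v π Jt vy vt w πy πt →
      (∀ y ∈ Icc (0:ℝ) L, ∀ t ∈ Icc (0:ℝ) T,
        HasDerivWithinAt (fun x => J x t) (Jy y t) (Icc 0 L) y) →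
      (∀ y ∈ Icc (0:ℝ) L, ∀ t ∈ Icc (0:ℝ) T,
        HasDerivWithinAt (fun x => vy x t) (vyy y t) (Icc 0 L) y) →
      (∀ y ∈ Icc (0:ℝ) L, ∀ t ∈ Icc (0:ℝ) T,
        HasDerivWithinAt (fun x => Jt x t) (Jyt y t) (Icc 0 L) y) →
      (∀ y ∈ Icc (0:ℝ) L, ∀ t ∈ Icc (0:ℝ) T,
        HasDerivWithinAt (fun x => πt x t) (πyt y t) (Icc 0 L) y) →
      ContinuousOn (fun p : ℝ × ℝ => Jy p.1 p.2) (Icc 0 L ×ˢ Icc 0 T) →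
      ContinuousOn (fun p : ℝ × ℝ => vyy p.1 p.2) (Icc 0 L ×ˢ Icc 0 T) →
      ContinuousOn (fun p : ℝ × ℝ => Jyt p.1 p.2) (Icc 0 L ×ˢ Icc 0 T) →
      ContinuousOn (fun p : ℝ × ℝ => πyt p.1 p.2) (Icc 0 L ×ˢ Icc 0 T) →
      (∀ t ∈ Icc (0:ℝ) T, v 0 t = 0 ∧ v L t = 0) →
      (∀ y ∈ Icc (0:ℝ) L, 0 ≤ π y 0) →
      sSup ((fun y => |π y 0|) '' Icc (0:ℝ) L) ≤ P₀ →
      (∀ y ∈ Icc (0:ℝ) L, Jlow ≤ J y 0 ∧ J y 0 ≤ Jbar) →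
      (∫ y in (0:ℝ)..L, J y 0) = ℓ₀ →
      (∫ y in (0:ℝ)..L, ρ₀ y) = m₀ →
      (∫ y in (0:ℝ)..L, (ρ₀ y * (v y 0) ^ 2 / 2 + J y 0 * π y 0 / (γ - 1))) = E₀ →
      Real.sqrt (∫ y in (0:ℝ)..L, (μ * vy y 0 / J y 0 - π y 0) ^ 2) ≤ K₀ →
      Real.sqrt (∫ y in (0:ℝ)..L, (Jy y 0) ^ 2)
          + Real.sqrt (∫ y in (0:ℝ)..L, (πy y 0) ^ 2) ≤ D₀ →
      sSup ((fun t => (∫ y in (0:ℝ)..L, (Jt y t) ^ 2)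
              + ∫ y in (0:ℝ)..L, (vy y t) ^ 2) '' Icc (0:ℝ) T)
        + (∫ t in (0:ℝ)..T,
            ((∫ y in (0:ℝ)..L, ρ₀ y * (vt y t) ^ 2)
              + (∫ y in (0:ℝ)..L, (vyy y t) ^ 2)
              + (∫ y in (0:ℝ)..L, (Jyt y t) ^ 2)
              + (sSup ((fun y => |πt y t|) '' Icc (0:ℝ) L)) ^ 2
              + (∫ y in (0:ℝ)..L, (πyt y t) ^ 2) ^ ((2:ℝ)/3)))
        ≤ C := by
  obtain ⟨C, hC, hle⟩ := second_order_estimates_general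
    ⟨L, T, γ, μ, ρbar, ℓ₀, Jlow, Jbar, P₀, E₀, K₀, D₀, hL, hT, hγ, hμ, hρbar, hℓ₀, hJlow, hJbar,
      hP₀, hE₀⟩
  exact ⟨C, hC, fun ρ₀ _ _ _ _ _ _ _ _ _ _ _ _ _ _ hρ₀ _ hρ₀_bounds cs hJy hvyy hJyt hπyt hJyc
    _ _ _ hv hπ₀ hP hJ₀ hℓ _ hE => hle ρ₀ _ _ _ _ _ _ _ _ _ _ _ _ _
      (fun y hy => (hρ₀ y hy).continuousWithinAt) (fun y hy => (hρ₀_bounds y hy).imp_left le_of_lt)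
      cs hJy hvyy hJyt hπyt hJyc hv hπ₀ hP hJ₀ hℓ hE⟩
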